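/- At the left endpoint x = a the series ∑_{n=0}^∞ c_n y_n(a) converges, and its sum f̄(a) equals f(a) if sin α ≠ 0, while f̄(a) = 0 if sin α = 0 (the Dirichlet case y(a) = 0). -/

import Mathlib

/-- `(lam, y)` is an eigenpair of the Sturm–Liouville problem
`-y'' + q y = lam y` on `[a,b]` with separated boundary conditions
`y(a) cos α + y'(a) sin α = 0`, `y(b) cos β + y'(b) sin β = 0`. -/
def IsSLEigenpair (a b : ℝ) (q : ℝ → ℝ) (α β : ℝ) (lam : ℝ) (y : ℝ → ℝ) : Prop :=
  ∃ y' y'' : ℝ → ℝ,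
    (∀ x ∈ Set.Icc a b, HasDerivWithinAt y (y' x) (Set.Icc a b) x) ∧
    (∀ x ∈ Set.Icc a b, HasDerivWithinAt y' (y'' x) (Set.Icc a b) x) ∧
    ContinuousOn y'' (Set.Icc a b) ∧
    (∃ x ∈ Set.Icc a b, y x ≠ 0) ∧
    (∀ x ∈ Set.Icc a b, -(y'' x) + q x * y x = lam * y x) ∧
    y a * Real.cos α + y' a * Real.sin α = 0 ∧
    y b * Real.cos β + y' b * Real.sin β = 0

section
open Set Filter Topology MeasureTheory
open scoped BoundedContinuousFunction

/-- A solution of the second order linear equation with potential Q on the interval. -/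
def SLSol (a b : ℝ) (Q z z' : ℝ → ℝ) : Prop :=
  (∀ x ∈ Icc a b, HasDerivWithinAt z (z' x) (Icc a b) x) ∧
  (∀ x ∈ Icc a b, HasDerivWithinAt z' (Q x * z x) (Icc a b) x)

theorem SLSol.cont {a b : ℝ} {Q z z' : ℝ → ℝ} (h : SLSol a b Q z z') : ContinuousOn z (Icc a b) :=
  fun x hx => (h.1 x hx).continuousWithinAt

theorem SLSol.cont' {a b : ℝ} {Q z z' : ℝ → ℝ} (h : SLSol a b Q z z') :
    ContinuousOn z' (Icc a b) :=
  fun x hx => (h.2 x hx).continuousWithinAt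

theorem SLSol.lin {a b : ℝ} {Q z z' w w' : ℝ → ℝ} (h : SLSol a b Q z z') (k : SLSol a b Q w w')
    (A B : ℝ) : SLSol a b Q (fun x => A * z x + B * w x) (fun x => A * z' x + B * w' x) := by
  refine ⟨fun x hx => ?_, fun x hx => ?_⟩
  · exact ((h.1 x hx).const_mul A).add ((k.1 x hx).const_mul B)
  · exact (((h.2 x hx).const_mul A).add ((k.2 x hx).const_mul B)).congr_deriv (by ring)

theorem sl_bdd {a b : ℝ} {Q : ℝ → ℝ} (hQ : ContinuousOn Q (Icc a b)) :
    ∃ B : ℝ, 0 ≤ B ∧ ∀ x ∈ Icc a b, |Q x| ≤ B := by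
  obtain ⟨B, hB⟩ := isCompact_Icc.exists_bound_of_continuousOn hQ
  exact ⟨max B 0, le_max_right _ _, fun x hx => (hB x hx).trans (le_max_left _ _)⟩

theorem sl_Ici_of_Icc {E : Type*} [NormedAddCommGroup E] [NormedSpace ℝ E] {a b x : ℝ}
    {f : ℝ → E} {f' : E}
    (hx : x ∈ Ico a b) (h : HasDerivWithinAt f f' (Icc a b) x) : HasDerivWithinAt f f' (Ici x) x := by
  apply h.mono_of_mem_nhdsWithin
  exact Icc_mem_nhdsGE_of_mem hx

theorem SLSol.eq_zero {a b : ℝ} {Q z z' : ℝ → ℝ} (hQ : ContinuousOn Q (Icc a b))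
    (h : SLSol a b Q z z') (h0 : z a = 0) (h1 : z' a = 0) : ∀ x ∈ Icc a b, z x = 0 := by
  obtain ⟨B, hB0, hB⟩ := sl_bdd hQ
  have key := eq_zero_of_abs_deriv_le_mul_abs_self_of_eq_zero_right
    (f := fun x => (z x, z' x)) (f' := fun x => (z' x, Q x * z x)) (K := max 1 B) (a := a) (b := b)
    (h.cont.prodMk h.cont')
    (fun x hx => sl_Ici_of_Icc hx
      ((h.1 x (Ico_subset_Icc_self hx)).prodMk (h.2 x (Ico_subset_Icc_self hx))))
    (by simp [h0, h1]) ?_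
  · intro x hx
    exact (Prod.ext_iff.1 (key x hx)).1
  · intro x hx
    have hb := hB x (Ico_subset_Icc_self hx)
    rw [Prod.norm_def, Prod.norm_def]
    simp only [Real.norm_eq_abs]
    apply max_le
    · calc |z' x| ≤ max |z x| |z' x| := le_max_right _ _
        _ ≤ max 1 B * max |z x| |z' x| :=
          le_mul_of_one_le_left (le_max_of_le_left (abs_nonneg _)) (le_max_left _ _)
    · rw [abs_mul]
      exact mul_le_mul (hb.trans (le_max_right _ _)) (le_max_left _ _) (abs_nonneg _)
        (le_max_of_le_left zero_le_one)

/-- truncation -/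
noncomputable def slcl (R y : ℝ) : ℝ := max (-R) (min R y)

theorem slcl_lip (R y w : ℝ) : |slcl R y - slcl R w| ≤ |y - w| := by
  unfold slcl
  calc _ ≤ |min R y - min R w| := by
        have := abs_max_sub_max_le_max (-R) (min R y) (-R) (min R w)
        simpa using this
    _ ≤ |y - w| := by
      have := abs_min_sub_min_le_max R y R w
      simpa using this

theorem slcl_le (R y : ℝ) (hR : 0 ≤ R) : |slcl R y| ≤ |y| := by
  have h0 : slcl R 0 = 0 := by unfold slcl; simp [hR]
  have := slcl_lip R y 0
  rwa [h0, sub_zero, sub_zero] at this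

theorem slcl_le' (R y : ℝ) (hR : 0 ≤ R) : |slcl R y| ≤ R := by
  unfold slcl
  rw [abs_le]
  exact ⟨le_max_left _ _, max_le (by linarith) (min_le_left _ _)⟩

theorem slcl_eq (R y : ℝ) (h : |y| ≤ R) : slcl R y = y := by
  unfold slcl
  rw [abs_le] at h
  rw [min_eq_right h.2, max_eq_right h.1]

theorem sl_exists_a {a b : ℝ} (hab : a ≤ b) {Q : ℝ → ℝ} (hQ : ContinuousOn Q (Icc a b)) (c0 c1 : ℝ) :
    ∃ z z', SLSol a b Q z z' ∧ z a = c0 ∧ z' a = c1 := by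
  obtain ⟨B, hB0, hB⟩ := sl_bdd hQ
  set K : ℝ := max 1 B with hK
  have hK1 : 1 ≤ K := le_max_left _ _
  have hKB : B ≤ K := le_max_right _ _
  have hK0 : 0 ≤ K := by linarith
  set R : ℝ := ‖(c0, c1)‖ * Real.exp (K * (b - a)) with hR
  have hR0 : 0 ≤ R := by positivity
  let F : ℝ → ℝ × ℝ → ℝ × ℝ := fun t p => (slcl R p.2, Q t * slcl R p.1)
  have hF1 : ∀ t ∈ Icc a b, ∀ p r : ℝ × ℝ, ‖F t p - F t r‖ ≤ K * ‖p - r‖ := by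
    intro t ht p r
    rw [Prod.norm_def, Prod.norm_def]
    simp only [Real.norm_eq_abs, F, Prod.fst_sub, Prod.snd_sub]
    apply max_le
    · calc _ ≤ |p.2 - r.2| := slcl_lip _ _ _
        _ ≤ max |p.1 - r.1| |p.2 - r.2| := le_max_right _ _
        _ ≤ _ := le_mul_of_one_le_left (le_max_of_le_left (abs_nonneg _)) hK1
    · rw [← mul_sub, abs_mul]
      exact mul_le_mul ((hB t ht).trans hKB) ((slcl_lip _ _ _).trans (le_max_left _ _))
        (abs_nonneg _) hK0
  have hF2 : ∀ t ∈ Icc a b, ∀ p : ℝ × ℝ, ‖F t p‖ ≤ K * ‖p‖ := by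
    intro t ht p
    have h0 : F t 0 = 0 := by
      simp [F, slcl, hR0]
    have := hF1 t ht p 0
    rwa [h0, sub_zero, sub_zero] at this
  have hF3 : ∀ t ∈ Icc a b, ∀ p : ℝ × ℝ, ‖F t p‖ ≤ K * R := by
    intro t ht p
    rw [Prod.norm_def]
    simp only [Real.norm_eq_abs, F]
    apply max_le
    · exact (slcl_le' _ _ hR0).trans (le_mul_of_one_le_left hR0 hK1)
    · rw [abs_mul]
      exact mul_le_mul ((hB t ht).trans hKB) (slcl_le' _ _ hR0) (abs_nonneg _) hK0
  have hPL : IsPicardLindelof F (⟨a, left_mem_Icc.2 hab⟩ : Icc a b) (c0, c1)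
      (Real.toNNReal (K * R * (b - a))) 0 (Real.toNNReal (K * R)) (Real.toNNReal K) := by
    constructor
    · intro t ht
      apply LipschitzOnWith.of_dist_le_mul
      intro p _ r _
      rw [dist_eq_norm, dist_eq_norm, Real.coe_toNNReal _ hK0]
      exact hF1 t ht p r
    · intro p _
      exact ContinuousOn.prodMk continuousOn_const (hQ.mul continuousOn_const)
    · intro t ht p _
      rw [Real.coe_toNNReal _ (by positivity)]
      exact hF3 t ht p
    · have : 0 ≤ b - a := by linarith
      rw [Real.coe_toNNReal _ (by positivity), Real.coe_toNNReal _ (by positivity)]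
      simp [this]
  obtain ⟨w, hw0, hw⟩ := hPL.exists_eq_forall_mem_Icc_hasDerivWithinAt₀
  have hwc : ContinuousOn w (Icc a b) := fun x hx => (hw x hx).continuousWithinAt
  have hb : ∀ x ∈ Icc a b, ‖w x‖ ≤ R := by
    intro x hx
    have := norm_le_gronwallBound_of_norm_deriv_right_le (δ := ‖(c0, c1)‖) (K := K) (ε := 0) hwc
      (fun x hx => sl_Ici_of_Icc hx (hw x (Ico_subset_Icc_self hx))) (by rw [← hw0])
      (fun x hx => by simpa using hF2 x (Ico_subset_Icc_self hx) (w x)) x hx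
    rw [gronwallBound_ε0] at this
    refine this.trans ?_
    rw [hR]
    have := hx.2
    gcongr
  refine ⟨fun x => (w x).1, fun x => (w x).2, ⟨fun x hx => ?_, fun x hx => ?_⟩, ?_, ?_⟩
  · have h := (ContinuousLinearMap.fst ℝ ℝ ℝ).hasFDerivAt.comp_hasDerivWithinAt x (hw x hx)
    have e : (F x (w x)).1 = (w x).2 := slcl_eq _ _ ((norm_snd_le (w x)).trans (hb x hx))
    exact h.congr_deriv e
  · have h := (ContinuousLinearMap.snd ℝ ℝ ℝ).hasFDerivAt.comp_hasDerivWithinAt x (hw x hx)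
    have e : (F x (w x)).2 = Q x * (w x).1 := by
      show Q x * slcl R (w x).1 = _
      rw [slcl_eq _ _ ((norm_fst_le (w x)).trans (hb x hx))]
    exact h.congr_deriv e
  · simp at hw0; simp [hw0]
  · simp at hw0; simp [hw0]

theorem sl_wronskian {a b : ℝ} (hab : a ≤ b) {Q z z' w w' : ℝ → ℝ} (h : SLSol a b Q z z')
    (k : SLSol a b Q w w') : ∀ x ∈ Icc a b, z' x * w x - z x * w' x = z' a * w a - z a * w' a := by
  have hd : ∀ x ∈ Icc a b, HasDerivWithinAt (fun x => z' x * w x - z x * w' x) 0 (Icc a b) x := by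
    intro x hx
    exact (((h.2 x hx).mul (k.1 x hx)).sub ((h.1 x hx).mul (k.2 x hx))).congr_deriv (by ring)
  apply constant_of_has_deriv_right_zero
  · exact fun x hx => (hd x hx).continuousWithinAt
  · exact fun x hx => sl_Ici_of_Icc hx (hd x (Ico_subset_Icc_self hx))

theorem sl_exists_b {a b : ℝ} (hab : a ≤ b) {Q : ℝ → ℝ} (hQ : ContinuousOn Q (Icc a b)) (c0 c1 : ℝ) :
    ∃ z z', SLSol a b Q z z' ∧ z b = c0 ∧ z' b = c1 := by
  obtain ⟨z, z', hz, z0, z1⟩ := sl_exists_a hab hQ 1 0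
  obtain ⟨w, w', hw, w0, w1⟩ := sl_exists_a hab hQ 0 1
  have hW := sl_wronskian hab hz hw b (right_mem_Icc.2 hab)
  rw [z0, z1, w0, w1] at hW
  refine ⟨_, _, hz.lin hw (c0 * w' b - c1 * w b) (-c0 * z' b + c1 * z b), ?_, ?_⟩
  · show _ * _ + _ * _ = _
    linear_combination (-c0) * hW
  · show _ * _ + _ * _ = _
    linear_combination (-c1) * hW

theorem sl_ftc {a b : ℝ} {g : ℝ → ℝ} (hg : ContinuousOn g (Icc a b)) :
    ∀ x ∈ Icc a b, HasDerivWithinAt (fun x => ∫ t in a..x, g t) (g x) (Icc a b) x := by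
  intro x hx
  have hab : a ≤ b := hx.1.trans hx.2
  have hc : Continuous (IccExtend hab ((Icc a b).domRestrict g)) := hg.domRestrict.Icc_extend'
  have hd := (hc.integral_hasStrictDerivAt a x).hasDerivAt.hasDerivWithinAt (s := Icc a b)
  have e : ∀ t ∈ Icc a b, IccExtend hab ((Icc a b).domRestrict g) t = g t := by
    intro t ht
    rw [IccExtend_of_mem _ _ ht]; rfl
  rw [e x hx] at hd
  refine hd.congr_of_mem ?_ hx
  intro y hy
  apply intervalIntegral.integral_congr
  intro t ht
  rw [uIcc_of_le hy.1] at ht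
  exact (e t ⟨ht.1, ht.2.trans hy.2⟩).symm

/-- FTC-2 within `Icc`. -/
theorem sl_ftc2 {a b : ℝ} {G g : ℝ → ℝ} (hg : ContinuousOn g (Icc a b))
    (hG : ∀ x ∈ Icc a b, HasDerivWithinAt G (g x) (Icc a b) x) {x y : ℝ} (hx : x ∈ Icc a b)
    (hy : y ∈ Icc a b) (hxy : x ≤ y) : ∫ t in x..y, g t = G y - G x := by
  have hsub : Icc x y ⊆ Icc a b := Icc_subset_Icc hx.1 hy.2
  apply intervalIntegral.integral_eq_sub_of_hasDeriv_right_of_le hxy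
  · exact fun t ht => ((hG t (hsub ht)).continuousWithinAt).mono hsub
  · intro t ht
    exact (sl_Ici_of_Icc ⟨(hsub (Ioo_subset_Icc_self ht)).1, lt_of_lt_of_le ht.2 hy.2⟩
      (hG t (hsub (Ioo_subset_Icc_self ht)))).mono Ioi_subset_Ici_self
  · exact (hg.mono (by rw [uIcc_of_le hxy]; exact hsub)).intervalIntegrable

/-- The Hilbert space `L²(a,b)`. -/
noncomputable abbrev slE (a b : ℝ) := Lp ℝ 2 (volume.restrict (Icc a b))

open Classical in
/-- The class of `g` in `L²(a,b)`. -/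
noncomputable def toE (a b : ℝ) (g : ℝ → ℝ) : slE a b :=
  if h : MemLp g 2 (volume.restrict (Icc a b)) then h.toLp g else 0

theorem toE_coe {a b : ℝ} {g : ℝ → ℝ} (h : MemLp g 2 (volume.restrict (Icc a b))) :
    toE a b g =ᵐ[volume.restrict (Icc a b)] g := by
  unfold toE
  rw [dif_pos h]
  exact h.coeFn_toLp

theorem sl_memLp {a b : ℝ} {g : ℝ → ℝ} (hg : ContinuousOn g (Icc a b)) :
    MemLp g 2 (volume.restrict (Icc a b)) := by
  obtain ⟨C, hC⟩ := isCompact_Icc.exists_bound_of_continuousOn hg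
  refine MemLp.of_bound (hg.aestronglyMeasurable measurableSet_Icc) C ?_
  rw [ae_restrict_iff' measurableSet_Icc]
  exact ae_of_all _ hC

theorem toE_of_mem {a b : ℝ} (f : slE a b) : toE a b f = f := by
  unfold toE
  rw [dif_pos (Lp.memLp f), Lp.toLp_coeFn]

theorem sl_inner_gen {a b : ℝ} (hab : a ≤ b) {f : ℝ → ℝ} {w : slE a b}
    (hf : MemLp f 2 (volume.restrict (Icc a b))) :
    inner ℝ (toE a b f) w = ∫ x in a..b, f x * w x := by
  rw [intervalIntegral.integral_of_le hab, ← integral_Icc_eq_integral_Ioc, L2.inner_def]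
  apply integral_congr_ae
  filter_upwards [toE_coe hf] with x h1
  rw [h1]
  simp [mul_comm]

theorem sl_inner {a b : ℝ} (hab : a ≤ b) {f g : ℝ → ℝ}
    (hf : MemLp f 2 (volume.restrict (Icc a b))) (hg : MemLp g 2 (volume.restrict (Icc a b))) :
    inner ℝ (toE a b f) (toE a b g) = ∫ x in a..b, f x * g x := by
  rw [sl_inner_gen hab hf, intervalIntegral.integral_of_le hab, intervalIntegral.integral_of_le hab,
    ← integral_Icc_eq_integral_Ioc, ← integral_Icc_eq_integral_Ioc]
  apply integral_congr_ae
  filter_upwards [toE_coe hg] with x h1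
  rw [h1]

theorem toE_eq {a b : ℝ} {f g : ℝ → ℝ} (hf : MemLp f 2 (volume.restrict (Icc a b)))
    (h : ∀ x ∈ Icc a b, f x = g x) : toE a b f = toE a b g := by
  have hfg : f =ᵐ[volume.restrict (Icc a b)] g := by
    rw [Filter.EventuallyEq, ae_restrict_iff' measurableSet_Icc]
    exact ae_of_all _ h
  apply Lp.ext
  have hg := hf.ae_eq hfg
  filter_upwards [toE_coe hf, toE_coe hg, hfg] with x h1 h2 h3
  rw [h1, h2, h3]

/-- Embedding of continuous functions into `L²`. -/
noncomputable def slJ {a b : ℝ} (hab : a ≤ b) : (Icc a b →ᵇ ℝ) →L[ℝ] slE a b :=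
  (BoundedContinuousFunction.toLp (E := ℝ) 2 (volume.restrict (Icc a b)) ℝ) ∘L
    (LinearMap.mkContinuous
      { toFun := fun g : Icc a b →ᵇ ℝ =>
          g.compContinuous ⟨projIcc a b hab, continuous_projIcc⟩
        map_add' := fun _ _ => rfl
        map_smul' := fun _ _ => rfl } 1 (by
        intro g
        rw [one_mul]
        refine (BoundedContinuousFunction.norm_le (norm_nonneg _)).2 fun x => ?_
        exact g.norm_coe_le_norm _))

theorem slJ_eq {a b : ℝ} (hab : a ≤ b) (g : Icc a b →ᵇ ℝ) : slJ hab g = toE a b (IccExtend hab g) := by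
  have hc : ContinuousOn (IccExtend hab g) (Icc a b) := (g.continuous.Icc_extend').continuousOn
  apply Lp.ext
  refine Filter.EventuallyEq.trans ?_ (toE_coe (sl_memLp hc)).symm
  exact BoundedContinuousFunction.coeFn_toLp 2 (volume.restrict (Icc a b)) ℝ
    (g.compContinuous ⟨projIcc a b hab, continuous_projIcc⟩)

/-- kernel sections -/
noncomputable def slK {a b : ℝ} (hab : a ≤ b) (G : C(Icc a b × Icc a b, ℝ)) : C(Icc a b, slE a b) :=
  ⟨fun x => slJ hab (BoundedContinuousFunction.mkOfCompact (G.curry x)),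
    (slJ hab).continuous.comp
      ((ContinuousMap.isometryEquivBoundedOfCompact (Icc a b) ℝ).continuous.comp G.curry.continuous)⟩

theorem slK_eq {a b : ℝ} (hab : a ≤ b) (G : C(Icc a b × Icc a b, ℝ)) (x : Icc a b) :
    slK hab G x = toE a b (IccExtend hab (fun t => G (x, t))) := slJ_eq hab _

/-- integral operator into continuous functions -/
noncomputable def slT1 {a b : ℝ} (hab : a ≤ b) (G : C(Icc a b × Icc a b, ℝ)) :
    slE a b →L[ℝ] (Icc a b →ᵇ ℝ) :=
  LinearMap.mkContinuous
    { toFun := fun f => BoundedContinuousFunction.mkOfCompact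
        ⟨fun x => inner ℝ (slK hab G x) f, by fun_prop⟩
      map_add' := fun f g => by
        ext x
        simp [inner_add_right]
      map_smul' := fun c f => by
        ext x
        simp [inner_smul_right] } ‖slK hab G‖ (by
      intro f
      refine (BoundedContinuousFunction.norm_le (by positivity)).2 fun x => ?_
      refine (norm_inner_le_norm (𝕜 := ℝ) (slK hab G x) f).trans ?_
      gcongr
      exact (slK hab G).norm_coe_le_norm x)

theorem slT1_apply {a b : ℝ} (hab : a ≤ b) (G : C(Icc a b × Icc a b, ℝ)) (f : slE a b)
    (x : Icc a b) : slT1 hab G f x = inner ℝ (slK hab G x) f := rfl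

theorem slT1_compact {a b : ℝ} (hab : a ≤ b) (G : C(Icc a b × Icc a b, ℝ)) :
    IsCompactOperator (slT1 hab G) := by
  have := (isCompactOperator_iff_isCompact_closure_image_ball
    (slT1 hab G : slE a b →ₗ[ℝ] (Icc a b →ᵇ ℝ)) zero_lt_one).2 ?_
  · exact this
  apply BoundedContinuousFunction.arzela_ascoli (Metric.closedBall 0 ‖slK hab G‖)
    (isCompact_closedBall _ _)
  · rintro _ x ⟨f, hf, rfl⟩
    rw [mem_closedBall_zero_iff]
    rw [mem_ball_zero_iff] at hf
    refine (norm_inner_le_norm (𝕜 := ℝ) (slK hab G x) f).trans ?_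
    calc _ ≤ ‖slK hab G‖ * 1 := by
          gcongr
          exact (slK hab G).norm_coe_le_norm x
      _ = _ := mul_one _
  · intro x
    rw [Metric.equicontinuousAt_iff]
    intro ε hε
    obtain ⟨δ, hδ, h⟩ := Metric.continuousAt_iff.1 ((slK hab G).continuous.continuousAt (x := x)) ε hε
    refine ⟨δ, hδ, fun y hy => ?_⟩
    rintro ⟨_, ⟨f, hf, rfl⟩⟩
    rw [mem_ball_zero_iff] at hf
    show dist (inner ℝ (slK hab G x) f) (inner ℝ (slK hab G y) f) < ε
    rw [dist_eq_norm, ← inner_sub_left]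
    have h2 := h hy
    rw [dist_comm, dist_eq_norm] at h2
    calc _ ≤ ‖slK hab G x - slK hab G y‖ * ‖f‖ := norm_inner_le_norm _ _
      _ ≤ ‖slK hab G x - slK hab G y‖ * 1 := by gcongr
      _ < ε := by rw [mul_one]; exact h2

/-- integral operator -/
noncomputable def slT {a b : ℝ} (hab : a ≤ b) (G : C(Icc a b × Icc a b, ℝ)) :
    slE a b →L[ℝ] slE a b := slJ hab ∘L slT1 hab G

theorem slT_compact {a b : ℝ} (hab : a ≤ b) (G : C(Icc a b × Icc a b, ℝ)) :
    IsCompactOperator (slT hab G) := (slT1_compact hab G).clm_comp (slJ hab)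

theorem sl_cont_proj {a b : ℝ} (hab : a ≤ b) (g : Icc a b → ℝ) (hg : Continuous g) :
    MemLp (IccExtend hab g) 2 (volume.restrict (Icc a b)) :=
  sl_memLp hg.Icc_extend'.continuousOn

theorem slT_inner {a b : ℝ} (hab : a ≤ b) (G : C(Icc a b × Icc a b, ℝ)) (f g : slE a b) :
    inner ℝ (slT hab G f) g = ∫ x in Icc a b, ∫ t in Icc a b,
      G (projIcc a b hab x, projIcc a b hab t) * (f t * g x) := by
  have h1 : slT hab G f = toE a b (IccExtend hab (slT1 hab G f)) := slJ_eq hab _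
  rw [h1, sl_inner_gen hab (sl_cont_proj hab _ (slT1 hab G f).continuous),
    intervalIntegral.integral_of_le hab, ← integral_Icc_eq_integral_Ioc]
  congr 1
  ext x
  show slT1 hab G f (projIcc a b hab x) * g x = _
  rw [slT1_apply, slK_eq, sl_inner_gen hab (sl_cont_proj hab _ (by fun_prop)),
    intervalIntegral.integral_of_le hab, ← integral_Icc_eq_integral_Ioc, ← integral_mul_const]
  congr 1
  ext t
  show G (projIcc a b hab x, projIcc a b hab t) * _ * _ = _
  ring

theorem slT_symm {a b : ℝ} (hab : a ≤ b) (G : C(Icc a b × Icc a b, ℝ))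
    (hG : ∀ x t, G (x, t) = G (t, x)) : (slT hab G : slE a b →ₗ[ℝ] slE a b).IsSymmetric := by
  intro f g
  show inner ℝ (slT hab G f) g = inner ℝ f (slT hab G g)
  rw [real_inner_comm (slT hab G g) f]
  show inner ℝ (slT hab G f) g = inner ℝ (slT hab G g) f
  rw [slT_inner, slT_inner, integral_integral_swap]
  · congr 1
    ext x
    congr 1
    ext t
    rw [hG]
    ring
  · have hf : Integrable f (volume.restrict (Icc a b)) := (Lp.memLp f).integrable (by norm_num)
    have hg : Integrable g (volume.restrict (Icc a b)) := (Lp.memLp g).integrable (by norm_num)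
    have := (hg.mul_prod hf).bdd_mul (c := ‖G‖)
      (f := fun p : ℝ × ℝ => G (projIcc a b hab p.1, projIcc a b hab p.2))
      (by
        apply Continuous.aestronglyMeasurable
        have : Continuous (projIcc a b hab) := continuous_projIcc
        fun_prop) (ae_of_all _ fun p => G.norm_coe_le_norm _)
    refine this.congr (ae_of_all _ fun p => ?_)
    simp only [Function.uncurry]
    ring

/-- Green kernel -/
noncomputable def slG {a b : ℝ} (u v : ℝ → ℝ) (W : ℝ) (hu : ContinuousOn u (Icc a b))
    (hv : ContinuousOn v (Icc a b)) : C(Icc a b × Icc a b, ℝ) :=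
  ⟨fun p => u (min p.1 p.2 : Icc a b) * v (max p.1 p.2 : Icc a b) / W, by
    have h1 : Continuous (fun x : Icc a b => u x) := hu.domRestrict
    have h2 : Continuous (fun x : Icc a b => v x) := hv.domRestrict
    exact ((h1.comp (continuous_fst.min continuous_snd)).mul
      (h2.comp (continuous_fst.max continuous_snd))).div_const W⟩

theorem slG_symm {a b : ℝ} (u v : ℝ → ℝ) (W : ℝ) (hu : ContinuousOn u (Icc a b))
    (hv : ContinuousOn v (Icc a b)) (x t : Icc a b) :
    slG u v W hu hv (x, t) = slG u v W hu hv (t, x) := by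
  show u (min x t : Icc a b) * v (max x t : Icc a b) / W
    = u (min t x : Icc a b) * v (max t x : Icc a b) / W
  rw [min_comm, max_comm]

theorem slG_formula {a b : ℝ} (hab : a ≤ b) (u v : ℝ → ℝ) (W : ℝ) (hu : ContinuousOn u (Icc a b))
    (hv : ContinuousOn v (Icc a b)) {ψ : ℝ → ℝ} (hψ : ContinuousOn ψ (Icc a b)) (x : Icc a b) :
    slT1 hab (slG u v W hu hv) (toE a b ψ) x
      = (v x * (∫ t in a..x, u t * ψ t) + u x * ∫ t in x..b, v t * ψ t) / W := by
  obtain ⟨x, hx⟩ := x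
  rw [slT1_apply, slK_eq, sl_inner hab (sl_cont_proj hab _ (by fun_prop)) (sl_memLp hψ)]
  have hi1 : IntervalIntegrable (fun t => u t * ψ t) volume a x := by
    apply ContinuousOn.intervalIntegrable
    rw [uIcc_of_le hx.1]
    exact (hu.mul hψ).mono (Icc_subset_Icc le_rfl hx.2)
  have hc : ContinuousOn (fun t => IccExtend hab (fun t => slG u v W hu hv (⟨x, hx⟩, t)) t * ψ t)
      (Icc a b) := by
    refine ContinuousOn.mul ?_ hψ
    exact (Continuous.Icc_extend' (by fun_prop)).continuousOn
  rw [← intervalIntegral.integral_add_adjacent_intervals (b := x)]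
  · rw [add_div, mul_div_right_comm, mul_div_right_comm (u _), ← intervalIntegral.integral_const_mul,
      ← intervalIntegral.integral_const_mul]
    congr 1
    · apply intervalIntegral.integral_congr
      intro t ht
      rw [uIcc_of_le hx.1] at ht
      have ht' : t ∈ Icc a b := ⟨ht.1, ht.2.trans hx.2⟩
      simp only
      rw [IccExtend_of_mem _ _ ht']
      show u (min (⟨x, hx⟩ : Icc a b) ⟨t, ht'⟩ : Icc a b) *
        v (max (⟨x, hx⟩ : Icc a b) ⟨t, ht'⟩ : Icc a b) / W * _ = _
      rw [min_eq_right (show (⟨t, ht'⟩ : Icc a b) ≤ ⟨x, hx⟩ from ht.2),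
        max_eq_left (show (⟨t, ht'⟩ : Icc a b) ≤ ⟨x, hx⟩ from ht.2)]
      ring
    · apply intervalIntegral.integral_congr
      intro t ht
      rw [uIcc_of_le hx.2] at ht
      have ht' : t ∈ Icc a b := ⟨hx.1.trans ht.1, ht.2⟩
      simp only
      rw [IccExtend_of_mem _ _ ht']
      show u (min (⟨x, hx⟩ : Icc a b) ⟨t, ht'⟩ : Icc a b) *
        v (max (⟨x, hx⟩ : Icc a b) ⟨t, ht'⟩ : Icc a b) / W * _ = _
      rw [min_eq_left (show (⟨x, hx⟩ : Icc a b) ≤ ⟨t, ht'⟩ from ht.1),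
        max_eq_right (show (⟨x, hx⟩ : Icc a b) ≤ ⟨t, ht'⟩ from ht.1)]
      ring
  · apply ContinuousOn.intervalIntegrable
    rw [uIcc_of_le hx.1]
    exact hc.mono (Icc_subset_Icc le_rfl hx.2)
  · apply ContinuousOn.intervalIntegrable
    rw [uIcc_of_le hx.2]
    exact hc.mono (Icc_subset_Icc hx.1 le_rfl)

section
variable {a b : ℝ} {Q u u' v v' : ℝ → ℝ}

theorem slG_solve (hab : a ≤ b) (hQ : ContinuousOn Q (Icc a b))
    (hu : SLSol a b Q u u') (hv : SLSol a b Q v v')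
    (hW : u' a * v a - u a * v' a ≠ 0) {phi phi' phi'' : ℝ → ℝ}
    (h1 : ∀ x ∈ Icc a b, HasDerivWithinAt phi (phi' x) (Icc a b) x)
    (h2 : ∀ x ∈ Icc a b, HasDerivWithinAt phi' (phi'' x) (Icc a b) x)
    (h3 : ContinuousOn phi'' (Icc a b)) (ha : u' a * phi a - u a * phi' a = 0)
    (hb : v' b * phi b - v b * phi' b = 0) (x : Icc a b) :
    slT1 hab (slG u v (u' a * v a - u a * v' a) hu.cont hv.cont)
      (toE a b (fun x => Q x * phi x - phi'' x)) x = phi x := by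
  have hphi : ContinuousOn phi (Icc a b) := fun x hx => (h1 x hx).continuousWithinAt
  have hψ : ContinuousOn (fun x => Q x * phi x - phi'' x) (Icc a b) := (hQ.mul hphi).sub h3
  rw [slG_formula hab _ _ _ _ _ hψ]
  obtain ⟨x, hx⟩ := x
  have key : ∀ w w', SLSol a b Q w w' → ∀ y ∈ Icc a b,
      HasDerivWithinAt (fun x => w' x * phi x - w x * phi' x) (w y * (Q y * phi y - phi'' y)) (Icc a b) y := by
    intro w w' hw y hy
    exact (((hw.2 y hy).mul (h1 y hy)).sub ((hw.1 y hy).mul (h2 y hy))).congr_deriv (by ring)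
  have e1 := sl_ftc2 (hu.cont.mul hψ) (key u u' hu) (left_mem_Icc.2 hab) hx hx.1
  have e2 := sl_ftc2 (hv.cont.mul hψ) (key v v' hv) hx (right_mem_Icc.2 hab) hx.2
  have e3 := sl_wronskian hab hu hv x hx
  simp only [Pi.mul_apply] at e1 e2 ⊢
  rw [e1, e2, div_eq_iff hW, ← e3, ha, hb]
  ring

theorem slG_solve' (hab : a ≤ b) (hQ : ContinuousOn Q (Icc a b))
    (hu : SLSol a b Q u u') (hv : SLSol a b Q v v')
    (hW : u' a * v a - u a * v' a ≠ 0) {phi phi' phi'' : ℝ → ℝ}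
    (h1 : ∀ x ∈ Icc a b, HasDerivWithinAt phi (phi' x) (Icc a b) x)
    (h2 : ∀ x ∈ Icc a b, HasDerivWithinAt phi' (phi'' x) (Icc a b) x)
    (h3 : ContinuousOn phi'' (Icc a b)) (ha : u' a * phi a - u a * phi' a = 0)
    (hb : v' b * phi b - v b * phi' b = 0) :
    slT hab (slG u v (u' a * v a - u a * v' a) hu.cont hv.cont)
      (toE a b (fun x => Q x * phi x - phi'' x)) = toE a b phi := by
  refine (slJ_eq hab _).trans ?_
  apply toE_eq
  · exact sl_cont_proj hab _ (BoundedContinuousFunction.continuous _)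
  · intro x hx
    rw [IccExtend_of_mem _ _ hx]
    exact slG_solve hab hQ hu hv hW h1 h2 h3 ha hb ⟨x, hx⟩

theorem slG_eig (hab : a ≤ b) (hu : SLSol a b Q u u') (hv : SLSol a b Q v v')
    (hW : u' a * v a - u a * v' a ≠ 0) (f : slE a b) (ν : ℝ) (hν : ν ≠ 0)
    (hf : slT hab (slG u v (u' a * v a - u a * v' a) hu.cont hv.cont) f = ν • f) :
    ∃ g g' g'' : ℝ → ℝ, ContinuousOn g (Icc a b) ∧ f = toE a b g ∧
      (∀ x ∈ Icc a b, HasDerivWithinAt g (g' x) (Icc a b) x) ∧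
      (∀ x ∈ Icc a b, HasDerivWithinAt g' (g'' x) (Icc a b) x) ∧
      (∀ x ∈ Icc a b, g'' x = (Q x - ν⁻¹) * g x) ∧
      (∃ k, g a = k * u a ∧ g' a = k * u' a) ∧ (∃ k, g b = k * v b ∧ g' b = k * v' b) := by
  set W := u' a * v a - u a * v' a with hWdef
  set g0 := slT1 hab (slG u v W hu.cont hv.cont) f with hg0
  set g : ℝ → ℝ := fun x => ν⁻¹ * IccExtend hab g0 x with hg
  have hgc0 : Continuous (IccExtend hab g0) := g0.continuous.Icc_extend'
  have hgc : ContinuousOn g (Icc a b) := (continuous_const.mul hgc0).continuousOn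
  have hfg : f = toE a b g := by
    have e1 : slT hab (slG u v W hu.cont hv.cont) f = toE a b (IccExtend hab g0) := slJ_eq hab _
    have e2 : f = ν⁻¹ • toE a b (IccExtend hab g0) := by
      rw [← e1, hf, smul_smul, inv_mul_cancel₀ hν, one_smul]
    rw [e2]
    apply Lp.ext
    have m1 := sl_memLp (a := a) (b := b) hgc0.continuousOn
    filter_upwards [toE_coe m1, toE_coe (sl_memLp hgc),
      Lp.coeFn_smul ν⁻¹ (toE a b (IccExtend hab g0))] with x h1 h2 h3
    rw [h2, h3, Pi.smul_apply, h1]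
    rfl
  have hformula : ∀ x ∈ Icc a b, g x = ν⁻¹ *
      ((v x * (∫ t in a..x, u t * g t) + u x * ∫ t in x..b, v t * g t) / W) := by
    intro x hx
    have := slG_formula hab u v W hu.cont hv.cont hgc ⟨x, hx⟩
    rw [← hfg] at this
    simp only at this
    rw [← this]
    show ν⁻¹ * _ = _
    rw [IccExtend_of_mem _ _ hx]
  have hu1 : ∀ x ∈ Icc a b, HasDerivWithinAt (fun x => ∫ t in a..x, u t * g t) (u x * g x)
      (Icc a b) x := sl_ftc (hu.cont.mul hgc)
  have hv1 : ∀ x ∈ Icc a b, HasDerivWithinAt (fun x => ∫ t in a..x, v t * g t) (v x * g x)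
      (Icc a b) x := sl_ftc (hv.cont.mul hgc)
  have hsplit : ∀ x ∈ Icc a b, ∫ t in x..b, v t * g t
      = (∫ t in a..b, v t * g t) - ∫ t in a..x, v t * g t := by
    intro x hx
    have hvg := hv.cont.mul hgc
    rw [eq_sub_iff_add_eq', intervalIntegral.integral_add_adjacent_intervals]
    · apply ContinuousOn.intervalIntegrable
      rw [uIcc_of_le hx.1]
      exact hvg.mono (Icc_subset_Icc le_rfl hx.2)
    · apply ContinuousOn.intervalIntegrable
      rw [uIcc_of_le hx.2]
      exact hvg.mono (Icc_subset_Icc hx.1 le_rfl)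
  have hv2 : ∀ x ∈ Icc a b, HasDerivWithinAt (fun x => ∫ t in x..b, v t * g t)
      (-(v x * g x)) (Icc a b) x := by
    intro x hx
    exact ((hv1 x hx).const_sub _).congr hsplit (hsplit x hx)
  set g' : ℝ → ℝ := fun x => ν⁻¹ *
      ((v' x * (∫ t in a..x, u t * g t) + u' x * ∫ t in x..b, v t * g t) / W) with hg'
  refine ⟨g, g', fun x => (Q x - ν⁻¹) * g x, hgc, hfg, ?_, ?_, fun _ _ => rfl, ?_, ?_⟩
  · intro x hx
    have := (((((hv.1 x hx).mul (hu1 x hx)).add ((hu.1 x hx).mul (hv2 x hx))).div_const W).const_mul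
      ν⁻¹).congr hformula (hformula x hx)
    refine this.congr_deriv ?_
    simp only [hg']
    ring
  · intro x hx
    have := (((((hv.2 x hx).mul (hu1 x hx)).add ((hu.2 x hx).mul (hv2 x hx))).div_const W).const_mul
      ν⁻¹)
    refine this.congr_deriv ?_
    have e3 := sl_wronskian hab hu hv x hx
    rw [← hWdef] at e3
    have e4 := hformula x hx
    have e5 : (v' x * u x - u' x * v x) / W = -1 := by
      rw [div_eq_iff hW]; linarith
    calc _ = Q x * (ν⁻¹ * ((v x * (∫ t in a..x, u t * g t) + u x * ∫ t in x..b, v t * g t) / W))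
          + ν⁻¹ * g x * ((v' x * u x - u' x * v x) / W) := by ring
      _ = _ := by rw [← e4, e5]; ring
  · refine ⟨ν⁻¹ * ((∫ t in a..b, v t * g t) / W), ?_, ?_⟩
    · rw [hformula a (left_mem_Icc.2 hab), intervalIntegral.integral_same]; ring
    · simp only [hg']
      rw [intervalIntegral.integral_same]; ring
  · refine ⟨ν⁻¹ * ((∫ t in a..b, u t * g t) / W), ?_, ?_⟩
    · rw [hformula b (right_mem_Icc.2 hab), intervalIntegral.integral_same]; ring
    · simp only [hg']
      rw [intervalIntegral.integral_same]; ring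

open scoped ContDiff in
theorem slG_ker (hab : a ≤ b) (hQ : ContinuousOn Q (Icc a b))
    (hu : SLSol a b Q u u') (hv : SLSol a b Q v v')
    (hW : u' a * v a - u a * v' a ≠ 0) (f : slE a b)
    (hf : slT hab (slG u v (u' a * v a - u a * v' a) hu.cont hv.cont) f = 0) : f = 0 := by
  have hsymm := slT_symm hab _ (slG_symm u v (u' a * v a - u a * v' a) hu.cont hv.cont)
  have hfi : Integrable f (volume.restrict (Icc a b)) := (Lp.memLp f).integrable (by norm_num)
  have key : ∀ᵐ x ∂volume, x ∈ Ioo a b → f x = 0 := by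
    apply isOpen_Ioo.ae_eq_zero_of_integral_contDiff_smul_eq_zero
    · exact (IntegrableOn.mono_set hfi Ioo_subset_Icc_self).locallyIntegrableOn
    · intro phi hphi hs hsupp
      have hd1 : Differentiable ℝ phi := hphi.differentiable (by simp)
      have hphi1 : ContDiff ℝ ∞ (deriv phi) := ((contDiff_infty_iff_deriv (f := phi)).1 hphi).2
      have hd2 : Differentiable ℝ (deriv phi) := hphi1.differentiable (by simp)
      have hphi2 : ContDiff ℝ ∞ (deriv (deriv phi)) :=
        ((contDiff_infty_iff_deriv (f := deriv phi)).1 hphi1).2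
      have hz : ∀ x, x ∉ Ioo a b → phi x = 0 ∧ deriv phi x = 0 := by
        intro x hx
        have hx' : x ∉ tsupport phi := fun h => hx (hsupp h)
        refine ⟨image_eq_zero_of_notMem_tsupport hx', ?_⟩
        exact image_eq_zero_of_notMem_tsupport (fun h => hx' (tsupport_deriv_subset h))
      have hza := hz a (by simp)
      have hzb := hz b (by simp)
      have hT := slG_solve' hab hQ hu hv hW (phi := phi) (phi' := deriv phi) (phi'' := deriv (deriv phi))
        (fun x _ => (hd1 x).hasDerivAt.hasDerivWithinAt)
        (fun x _ => (hd2 x).hasDerivAt.hasDerivWithinAt) hphi2.continuous.continuousOn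
        (by rw [hza.1, hza.2]; ring) (by rw [hzb.1, hzb.2]; ring)
      have h0 : inner ℝ (toE a b phi) f = 0 := by
        rw [← hT]
        refine (hsymm _ _).trans ?_
        show inner ℝ _ (slT hab _ f) = 0
        rw [hf, inner_zero_right]
      rw [sl_inner_gen hab (sl_memLp hd1.continuous.continuousOn),
        intervalIntegral.integral_of_le hab, ← integral_Icc_eq_integral_Ioc] at h0
      rw [← h0, ← integral_indicator measurableSet_Icc]
      congr 1
      ext x
      by_cases hx : x ∈ Icc a b
      · rw [indicator_of_mem hx]; rfl
      · rw [indicator_of_notMem hx, (hz x (fun h => hx (Ioo_subset_Icc_self h))).1, zero_smul]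
  apply Lp.ext
  have := (ae_restrict_iff' (μ := volume) (measurableSet_Ioo (a := a) (b := b))).2 key
  rw [restrict_Ioo_eq_restrict_Icc] at this
  filter_upwards [this, Lp.coeFn_zero ℝ 2 (volume.restrict (Icc a b))] with x h1 h2
  rw [h1, h2]; rfl
end

theorem toE_smul {a b : ℝ} {g : ℝ → ℝ} (hg : MemLp g 2 (volume.restrict (Icc a b))) (k : ℝ) :
    toE a b (fun x => k * g x) = k • toE a b g := by
  have h2 : MemLp (fun x => k * g x) 2 (volume.restrict (Icc a b)) := hg.const_mul k
  apply Lp.ext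
  filter_upwards [toE_coe hg, toE_coe h2, Lp.coeFn_smul k (toE a b g)] with x e1 e2 e3
  rw [e2, e3, Pi.smul_apply, e1, smul_eq_mul]

/-- the data of the problem with `sin α ≠ 0` -/
structure SLData (a b : ℝ) (q : ℝ → ℝ) (h β : ℝ) (lam : ℕ → ℝ) (y y' : ℕ → ℝ → ℝ) : Prop where
  hab : a < b
  hq : ContinuousOn q (Icc a b)
  sol : ∀ n, SLSol a b (fun x => q x - lam n) (y n) (y' n)
  bca : ∀ n, y' n a = h * y n a
  bcb : ∀ n, y n b * Real.cos β + y' n b * Real.sin β = 0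
  norm : ∀ n, ∫ x in a..b, (y n x) ^ 2 = 1
  mono : StrictMono lam
  complete : ∀ μ z z', SLSol a b (fun x => q x - μ) z z' → z' a = h * z a →
    z b * Real.cos β + z' b * Real.sin β = 0 → (∃ x ∈ Icc a b, z x ≠ 0) → ∃ n, lam n = μ

section
variable {a b : ℝ} {q : ℝ → ℝ} {h β : ℝ} {lam : ℕ → ℝ} {y y' : ℕ → ℝ → ℝ}

theorem SLData.green (D : SLData a b q h β lam y y') :
    ∃ u u' v v' : ℝ → ℝ, SLSol a b (fun x => q x - (lam 0 - 1)) u u' ∧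
      SLSol a b (fun x => q x - (lam 0 - 1)) v v' ∧ u a = 1 ∧ u' a = h ∧
      v b = Real.sin β ∧ v' b = - Real.cos β ∧ u' a * v a - u a * v' a ≠ 0 := by
  have hQ : ContinuousOn (fun x => q x - (lam 0 - 1)) (Icc a b) := D.hq.sub continuousOn_const
  obtain ⟨u, u', hu, u0, u1⟩ := sl_exists_a D.hab.le hQ 1 h
  obtain ⟨v, v', hv, v0, v1⟩ := sl_exists_b D.hab.le hQ (Real.sin β) (-Real.cos β)
  refine ⟨u, u', v, v', hu, hv, u0, u1, v0, v1, fun hW => ?_⟩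
  rw [u0, u1] at hW
  have hne : ∃ x ∈ Icc a b, v x ≠ 0 := by
    by_contra hcon
    push Not at hcon
    have hb := right_mem_Icc.2 D.hab.le
    have hz : HasDerivWithinAt v 0 (Icc a b) b :=
      (hasDerivWithinAt_const b (Icc a b) (0:ℝ)).congr hcon (hcon b hb)
    have := (uniqueDiffOn_Icc D.hab b hb).eq_deriv _ (hv.1 b hb) hz
    have e0 := hcon b hb
    have := Real.sin_sq_add_cos_sq β
    nlinarith
  obtain ⟨n, hn⟩ := D.complete _ v v' hv (by linarith) (by rw [v0, v1]; ring) hne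
  have := D.mono.monotone (Nat.zero_le n)
  linarith

theorem SLData.cont (D : SLData a b q h β lam y y') (n : ℕ) : ContinuousOn (y n) (Icc a b) :=
  (D.sol n).cont

theorem SLData.memLp (D : SLData a b q h β lam y y') (n : ℕ) :
    MemLp (y n) 2 (volume.restrict (Icc a b)) := sl_memLp (D.sol n).cont

theorem SLData.ne_zero (D : SLData a b q h β lam y y') (n : ℕ) : y n a ≠ 0 := by
  intro h0
  have hz := (D.sol n).eq_zero (D.hq.sub continuousOn_const) h0 (by rw [D.bca, h0, mul_zero])
  have := D.norm n
  rw [intervalIntegral.integral_congr (g := fun _ => 0)] at this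
  · simp at this
  · intro x hx
    rw [uIcc_of_le D.hab.le] at hx
    simp [hz x hx]

theorem SLData.ortho (D : SLData a b q h β lam y y') {n m : ℕ} (hnm : n ≠ m) :
    ∫ x in a..b, y n x * y m x = 0 := by
  have hl : lam n - lam m ≠ 0 := sub_ne_zero.2 (D.mono.injective.ne hnm)
  have hd : ∀ x ∈ Icc a b, HasDerivWithinAt (fun x => y n x * y' m x - y' n x * y m x)
      ((lam n - lam m) * (y n x * y m x)) (Icc a b) x := by
    intro x hx
    exact ((((D.sol n).1 x hx).mul ((D.sol m).2 x hx)).sub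
      (((D.sol n).2 x hx).mul ((D.sol m).1 x hx))).congr_deriv (by ring)
  have := sl_ftc2 (continuousOn_const.mul ((D.cont n).mul (D.cont m))) hd
    (left_mem_Icc.2 D.hab.le) (right_mem_Icc.2 D.hab.le) D.hab.le
  have hb : y n b * y' m b - y' n b * y m b = 0 := by
    have h1 := D.bcb n
    have h2 := D.bcb m
    have h3 := Real.sin_sq_add_cos_sq β
    linear_combination (-(y n b * y' m b - y' n b * y m b)) * h3
      + Real.cos β * (y' m b * h1 - y' n b * h2)
      + Real.sin β * (y n b * h2 - y m b * h1)
  have e : ∫ x in a..b, (lam n - lam m) * (y n x * y m x) = 0 := by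
    refine this.trans ?_
    show (y n b * y' m b - y' n b * y m b) - (y n a * y' m a - y' n a * y m a) = 0
    rw [hb, D.bca, D.bca]; ring
  rw [intervalIntegral.integral_const_mul] at e
  exact (mul_eq_zero.1 e).resolve_left hl

theorem SLData.orthonormal (D : SLData a b q h β lam y y') :
    Orthonormal ℝ (fun n => toE a b (y n)) := by
  rw [orthonormal_iff_ite]
  intro n m
  rw [sl_inner D.hab.le (D.memLp n) (D.memLp m)]
  split_ifs with hnm
  · subst hnm
    rw [← D.norm n]; congr 1; ext x; ring
  · exact D.ortho hnm

theorem SLData.lam_pos (D : SLData a b q h β lam y y') (n : ℕ) : 1 ≤ lam n - (lam 0 - 1) := by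
  have := D.mono.monotone (Nat.zero_le n)
  linarith

theorem SLData.green_apply (D : SLData a b q h β lam y y') {u u' v v' : ℝ → ℝ}
    (hu : SLSol a b (fun x => q x - (lam 0 - 1)) u u')
    (hv : SLSol a b (fun x => q x - (lam 0 - 1)) v v') (u0 : u a = 1) (u1 : u' a = h)
    (v0 : v b = Real.sin β) (v1 : v' b = - Real.cos β) (hW : u' a * v a - u a * v' a ≠ 0) (n : ℕ)
    (x : Icc a b) :
    inner ℝ (slK D.hab.le (slG u v (u' a * v a - u a * v' a) hu.cont hv.cont) x) (toE a b (y n))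
      = y n x / (lam n - (lam 0 - 1)) := by
  have hp := D.lam_pos n
  have := slG_solve D.hab.le (D.hq.sub continuousOn_const) hu hv hW (D.sol n).1 (D.sol n).2
    ((D.hq.sub continuousOn_const).mul (D.cont n)) (by rw [u0, u1, D.bca]; ring)
    (by rw [v0, v1]; linear_combination - D.bcb n) x
  rw [eq_div_iff (by linarith), ← this, slT1_apply]
  have e : (fun x => (q x - (lam 0 - 1)) * y n x - (q x - lam n) * y n x)
      = fun x => (lam n - (lam 0 - 1)) * y n x := by ext x; ring
  refine Eq.trans ?_ (congrArg (fun w => inner ℝ (slK D.hab.le (slG u v (u' a * v a - u a * v' a)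
    hu.cont hv.cont) x) (toE a b w)) e.symm)
  rw [toE_smul (D.memLp n), inner_smul_right]
  ring

theorem SLData.basis (D : SLData a b q h β lam y y') :
    ∃ B : HilbertBasis ℕ ℝ (slE a b), ∀ n, B n = toE a b (y n) := by
  obtain ⟨u, u', v, v', hu, hv, u0, u1, v0, v1, hW⟩ := D.green
  have hQ : ContinuousOn (fun x => q x - (lam 0 - 1)) (Icc a b) := D.hq.sub continuousOn_const
  set T := slT D.hab.le (slG u v (u' a * v a - u a * v' a) hu.cont hv.cont) with hT
  have hsp : (Submodule.span ℝ (Set.range (fun n => toE a b (y n))))ᗮ = ⊥ := by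
    rw [eq_bot_iff]
    have hs := ContinuousLinearMap.orthogonalComplement_iSup_eigenspaces_eq_bot
      (slT_compact D.hab.le (slG u v (u' a * v a - u a * v' a) hu.cont hv.cont))
      (slT_symm D.hab.le _ (slG_symm u v (u' a * v a - u a * v' a) hu.cont hv.cont))
    refine le_trans ?_ hs.le
    apply Submodule.orthogonal_le
    apply iSup_le
    intro ν f hf
    rw [Module.End.mem_eigenspace_iff] at hf
    have hf' : T f = ν • f := hf
    by_cases hν : ν = 0
    · rw [hν, zero_smul] at hf'
      rw [slG_ker D.hab.le hQ hu hv hW f hf']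
      exact Submodule.zero_mem _
    · obtain ⟨g, g', g'', hgc, hfg, d1, d2, he, ⟨k, k0, k1⟩, ⟨l, l0, l1⟩⟩ :=
        slG_eig D.hab.le hu hv hW f ν hν hf'
      by_cases hz : ∃ x ∈ Icc a b, g x ≠ 0
      · have hg : SLSol a b (fun x => q x - (lam 0 - 1 + ν⁻¹)) g g' := by
          refine ⟨d1, fun x hx => (d2 x hx).congr_deriv ?_⟩
          rw [he x hx]; ring
        have hga : g' a = h * g a := by rw [k0, k1, u0, u1]; ring
        obtain ⟨n, hn⟩ := D.complete _ g g' hg hga (by rw [l0, l1, v0, v1]; ring) hz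
        rw [← hn] at hg
        have hzero := (hg.lin (D.sol n) (y n a) (-g a)).eq_zero (D.hq.sub continuousOn_const)
          (by ring) (by rw [hga, D.bca]; ring)
        have hy := D.ne_zero n
        have : f = (g a / y n a) • toE a b (y n) := by
          rw [hfg, ← toE_smul (D.memLp n)]
          apply toE_eq (sl_memLp hgc)
          intro x hx
          have := hzero x hx
          field_simp
          linarith
        rw [this]
        exact Submodule.smul_mem _ _ (Submodule.subset_span ⟨n, rfl⟩)
      · push Not at hz
        have : f = 0 := by
          rw [hfg, toE_eq (sl_memLp hgc) (g := fun x => 0 * g x) (by intro x hx; rw [hz x hx]; ring),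
            toE_smul (sl_memLp hgc), zero_smul]
        rw [this]
        exact Submodule.zero_mem _
  refine ⟨HilbertBasis.mkOfOrthogonalEqBot D.orthonormal hsp, fun n => ?_⟩
  rw [HilbertBasis.coe_mkOfOrthogonalEqBot]

theorem SLData.tendsto (D : SLData a b q h β lam y y') : Tendsto lam atTop atTop := by
  obtain ⟨u, u', v, v', hu, hv, u0, u1, v0, v1, hW⟩ := D.green
  set K := slK D.hab.le (slG u v (u' a * v a - u a * v' a) hu.cont hv.cont) with hK
  have hbes : ∀ N : ℕ, ∑ n ∈ Finset.range N, (1 / (lam n - (lam 0 - 1))) ^ 2 ≤ ‖K‖ ^ 2 * (b - a) := by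
    intro N
    have h1 : ∀ x ∈ Icc a b, ∑ n ∈ Finset.range N, (1 / (lam n - (lam 0 - 1))) ^ 2 * (y n x) ^ 2
        ≤ ‖K‖ ^ 2 := by
      intro x hx
      have := D.orthonormal.sum_inner_products_le (K ⟨x, hx⟩) (s := Finset.range N)
      calc _ = ∑ n ∈ Finset.range N, ‖inner ℝ (toE a b (y n)) (K ⟨x, hx⟩)‖ ^ 2 := by
            apply Finset.sum_congr rfl
            intro n _
            rw [real_inner_comm, D.green_apply hu hv u0 u1 v0 v1 hW n ⟨x, hx⟩, Real.norm_eq_abs,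
              sq_abs]
            ring
        _ ≤ ‖K ⟨x, hx⟩‖ ^ 2 := this
        _ ≤ _ := by gcongr; exact K.norm_coe_le_norm _
    have hint : ∀ n, IntervalIntegrable (fun x => (1 / (lam n - (lam 0 - 1))) ^ 2 * (y n x) ^ 2)
        volume a b := by
      intro n
      apply ContinuousOn.intervalIntegrable
      rw [uIcc_of_le D.hab.le]
      exact continuousOn_const.mul ((D.cont n).pow 2)
    have h2 := intervalIntegral.integral_mono_on (μ := volume) D.hab.le
      (f := fun x => ∑ n ∈ Finset.range N, (1 / (lam n - (lam 0 - 1))) ^ 2 * (y n x) ^ 2)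
      (g := fun _ => ‖K‖ ^ 2) (by
        apply ContinuousOn.intervalIntegrable
        rw [uIcc_of_le D.hab.le]
        exact continuousOn_finsetSum _ (fun n _ => continuousOn_const.mul ((D.cont n).pow 2))) (by simp) h1
    rw [intervalIntegral.integral_finsetSum (fun n _ => hint n)] at h2
    simp only [intervalIntegral.integral_const_mul, D.norm, mul_one, intervalIntegral.integral_const,
      smul_eq_mul] at h2
    linarith
  have hle := hbes
  apply tendsto_atTop_atTop_of_monotone D.mono.monotone
  intro c
  by_contra hcon
  push Not at hcon
  set d := max 1 (c - (lam 0 - 1)) with hd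
  have hd1 : 1 ≤ d := le_max_left _ _
  obtain ⟨N, hN⟩ := exists_nat_gt (‖K‖ ^ 2 * (b - a) * d ^ 2)
  have h3 : (N : ℝ) * (1 / d) ^ 2 ≤ ∑ n ∈ Finset.range N, (1 / (lam n - (lam 0 - 1))) ^ 2 := by
    rw [← nsmul_eq_mul, ← Finset.card_range N, ← Finset.sum_const, Finset.card_range]
    apply Finset.sum_le_sum
    intro n _
    have h4 := D.lam_pos n
    have h5 := hcon n
    have h6 : lam n - (lam 0 - 1) ≤ d := le_trans (by linarith) (le_max_right _ _)
    have : 0 < lam n - (lam 0 - 1) := by linarith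
    gcongr
  have h7 := h3.trans (hbes N)
  rw [one_div, inv_pow, ← div_eq_mul_inv, div_le_iff₀ (by positivity)] at h7
  linarith
end

theorem sl_abs_mul (x s : ℝ) (hs : 0 < s) : |x * s| = |x| * s := by
  rw [abs_mul, abs_of_pos hs]

theorem sl_mvt {a b : ℝ} {F F' : ℝ → ℝ} {C : ℝ}
    (hF : ∀ x ∈ Icc a b, HasDerivWithinAt F (F' x) (Icc a b) x)
    (hC : ∀ x ∈ Icc a b, |F' x| ≤ C) {x : ℝ} (hx : x ∈ Icc a b) (hC0 : 0 ≤ C) :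
    |F x - F a| ≤ C * (b - a) := by
  have ha : a ∈ Icc a b := left_mem_Icc.2 (hx.1.trans hx.2)
  have := (convex_Icc a b).norm_image_sub_le_of_norm_hasDerivWithin_le hF hC ha hx
  rw [Real.norm_eq_abs, Real.norm_eq_abs, abs_of_nonneg (by linarith [hx.1] : (0:ℝ) ≤ x - a)] at this
  exact this.trans (mul_le_mul_of_nonneg_left (by linarith [hx.2]) hC0)

theorem sl_dcos (s a x : ℝ) (S : Set ℝ) :
    HasDerivWithinAt (fun x => Real.cos (s * (x - a))) (-(s * Real.sin (s * (x - a)))) S x := by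
  have h1 : HasDerivAt (fun x => s * (x - a)) s x := by
    simpa using ((hasDerivAt_id x).sub_const a).const_mul s
  exact (h1.cos.hasDerivWithinAt).congr_deriv (by ring)

theorem sl_dsin (s a x : ℝ) (S : Set ℝ) :
    HasDerivWithinAt (fun x => Real.sin (s * (x - a))) (s * Real.cos (s * (x - a))) S x := by
  have h1 : HasDerivAt (fun x => s * (x - a)) s x := by
    simpa using ((hasDerivAt_id x).sub_const a).const_mul s
  exact (h1.sin.hasDerivWithinAt).congr_deriv (by ring)

section
variable {a b : ℝ} {q : ℝ → ℝ} {h B : ℝ}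

theorem sl_asym (hab : a < b) (hB0 : 0 ≤ B) (hB : ∀ x ∈ Icc a b, |q x| ≤ B) {s : ℝ} (hs1 : 1 ≤ s)
    (hs2 : 4 * B * (b - a) ≤ s) (hs3 : |h| ≤ s) {u u' : ℝ → ℝ}
    (hu : SLSol a b (fun x => q x - s ^ 2) u u') (u0 : u a = 1) (u1 : u' a = h) :
    ∀ x ∈ Icc a b, |u x| ≤ 4 ∧ |u x - Real.cos (s * (x - a))| ≤ (|h| + 8 * B * (b - a)) / s ∧
      |u' x + s * Real.sin (s * (x - a))| ≤ |h| + 8 * B * (b - a) := by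
  have hs0 : 0 < s := by linarith
  have hL : 0 < b - a := by linarith
  set p : ℝ → ℝ := fun x => u x * Real.cos (s * (x - a)) - u' x / s * Real.sin (s * (x - a)) with hp
  set r : ℝ → ℝ := fun x => u x * Real.sin (s * (x - a)) + u' x / s * Real.cos (s * (x - a)) with hr
  have hpd : ∀ x ∈ Icc a b, HasDerivWithinAt p (-(q x * u x / s * Real.sin (s * (x - a))))
      (Icc a b) x := by
    intro x hx
    refine (((hu.1 x hx).mul (sl_dcos s a x _)).sub
      (((hu.2 x hx).div_const s).mul (sl_dsin s a x _))).congr_deriv ?_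
    field_simp
    ring
  have hrd : ∀ x ∈ Icc a b, HasDerivWithinAt r (q x * u x / s * Real.cos (s * (x - a)))
      (Icc a b) x := by
    intro x hx
    refine (((hu.1 x hx).mul (sl_dsin s a x _)).add
      (((hu.2 x hx).div_const s).mul (sl_dcos s a x _))).congr_deriv ?_
    field_simp
    ring
  have hpa : p a = 1 := by simp [hp, u0]
  have hra : r a = h / s := by simp [hr, u1]
  have hup : ∀ x, u x = p x * Real.cos (s * (x - a)) + r x * Real.sin (s * (x - a)) := by
    intro x
    simp only [hp, hr]
    linear_combination (-u x) * Real.sin_sq_add_cos_sq (s * (x - a))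
  have hur : ∀ x, u' x = s * (-p x * Real.sin (s * (x - a)) + r x * Real.cos (s * (x - a))) := by
    intro x
    simp only [hp, hr]
    have : s * (u' x / s) = u' x := by field_simp
    linear_combination (-(s * (u' x / s))) * Real.sin_sq_add_cos_sq (s * (x - a)) - this
  obtain ⟨x0, hx0, hmax⟩ := isCompact_Icc.exists_isMaxOn (nonempty_Icc.2 hab.le) hu.cont.abs
  set M := |u x0| with hM
  have hM' : ∀ x ∈ Icc a b, |u x| ≤ M := fun x hx => hmax hx
  have hM0 : 0 ≤ M := abs_nonneg _
  have hqu : ∀ x ∈ Icc a b, |q x * u x / s| ≤ B * M / s := by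
    intro x hx
    rw [abs_div, abs_mul, abs_of_pos hs0]
    have := hB x hx
    have := hM' x hx
    gcongr
  have hbp : ∀ x ∈ Icc a b, |p x - 1| ≤ B * M / s * (b - a) := by
    intro x hx
    rw [← hpa]
    refine sl_mvt hpd (fun t ht => ?_) hx (by positivity)
    rw [abs_neg, abs_mul]
    calc _ ≤ B * M / s * 1 := by
          gcongr
          · exact hqu t ht
          · exact Real.abs_sin_le_one _
      _ = _ := mul_one _
  have hbr : ∀ x ∈ Icc a b, |r x - h / s| ≤ B * M / s * (b - a) := by
    intro x hx
    rw [← hra]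
    refine sl_mvt hrd (fun t ht => ?_) hx (by positivity)
    rw [abs_mul]
    calc _ ≤ B * M / s * 1 := by
          gcongr
          · exact hqu t ht
          · exact Real.abs_cos_le_one _
      _ = _ := mul_one _
  have hcomb : ∀ A A' c c' : ℝ, |c| ≤ 1 → |c'| ≤ 1 → |A * c + A' * c'| ≤ |A| + |A'| := by
    intro A A' c c' hc hc'
    calc _ ≤ |A * c| + |A' * c'| := abs_add_le _ _
      _ ≤ _ := by
        rw [abs_mul, abs_mul]
        have := mul_le_mul_of_nonneg_left hc (abs_nonneg A)
        have := mul_le_mul_of_nonneg_left hc' (abs_nonneg A')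
        linarith
  have hhs : |h / s| = |h| / s := by rw [abs_div, abs_of_pos hs0]
  have hhs1 : |h| / s ≤ 1 := by rw [div_le_one hs0]; exact hs3
  have hr' : ∀ x ∈ Icc a b, |r x| ≤ |h| / s + B * M / s * (b - a) := by
    intro x hx
    have h1 := hbr x hx
    have h2 := abs_add_le (r x - h / s) (h / s)
    rw [sub_add_cancel, hhs] at h2
    linarith
  have hML : B * M / s * (b - a) ≤ M / 4 := by
    rw [div_mul_eq_mul_div, div_le_iff₀ hs0]
    nlinarith
  have hM4 : M ≤ 4 := by
    have h1 := hbp x0 hx0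
    have h2 := hr' x0 hx0
    have h3 : M ≤ |p x0| + |r x0| := by
      rw [hM, hup]
      exact hcomb _ _ _ _ (Real.abs_cos_le_one _) (Real.abs_sin_le_one _)
    have h4 := abs_add_le (p x0 - 1) 1
    rw [sub_add_cancel, abs_one] at h4
    linarith
  have hBM : B * M / s * (b - a) ≤ 4 * B * (b - a) / s := by
    rw [div_mul_eq_mul_div]
    have : B * M * (b - a) ≤ 4 * B * (b - a) := by
      have := mul_le_mul_of_nonneg_left hM4 (mul_nonneg hB0 hL.le)
      linarith
    gcongr
  have hsum : ∀ x ∈ Icc a b, |p x - 1| + |r x| ≤ (|h| + 8 * B * (b - a)) / s := by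
    intro x hx
    have h1 := hbp x hx
    have h2 := hr' x hx
    have : (|h| + 8 * B * (b - a)) / s = |h| / s + 4 * B * (b - a) / s + 4 * B * (b - a) / s := by
      ring
    linarith
  intro x hx
  refine ⟨(hM' x hx).trans hM4, ?_, ?_⟩
  · refine le_trans ?_ (hsum x hx)
    rw [hup x]
    have := hcomb (p x - 1) (r x) _ _ (Real.abs_cos_le_one (s * (x - a)))
      (Real.abs_sin_le_one (s * (x - a)))
    refine le_trans (le_of_eq ?_) this
    congr 1
    ring
  · have h1 := hcomb (p x - 1) (r x) (-Real.sin (s * (x - a))) _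
      (by rw [abs_neg]; exact Real.abs_sin_le_one _)
      (Real.abs_cos_le_one (s * (x - a)))
    have h2 := h1.trans (hsum x hx)
    rw [le_div_iff₀ hs0] at h2
    rw [hur x]
    calc _ = |(p x - 1) * -Real.sin (s * (x - a)) + r x * Real.cos (s * (x - a))| * s := by
          rw [← sl_abs_mul _ _ hs0]
          congr 1; ring
      _ ≤ _ := h2

/-- consequences for integrals -/
theorem sl_asym2 (hab : a < b) (hq : ContinuousOn q (Icc a b)) (h : ℝ) :
    ∃ C s0 : ℝ, 0 ≤ C ∧ 1 ≤ s0 ∧ ∀ s, s0 ≤ s → ∀ u u' : ℝ → ℝ,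
      SLSol a b (fun x => q x - s ^ 2) u u' → u a = 1 → u' a = h →
      (∀ x ∈ Icc a b, |u x| ≤ 4 ∧ |u x - Real.cos (s * (x - a))| ≤ C / s ∧
        |u' x + s * Real.sin (s * (x - a))| ≤ C ∧
        |(∫ t in a..x, u t) - Real.sin (s * (x - a)) / s| ≤ C / s ^ 2) ∧
      |(∫ t in a..b, u t ^ 2) - (b - a) / 2| ≤ C / s := by
  obtain ⟨B, hB0, hB⟩ := sl_bdd hq
  have hL : 0 < b - a := by linarith
  set C0 := |h| + 8 * B * (b - a) with hC0
  have hC00 : 0 ≤ C0 := by positivity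
  set C := C0 + (4 * B * (b - a) + |h|) + (5 * C0 * (b - a) + 1) with hC
  have e1 : 0 ≤ 4 * B * (b - a) + |h| := by positivity
  have e2 : 0 ≤ 5 * C0 * (b - a) + 1 := by positivity
  refine ⟨C, max 1 (max (4 * B * (b - a)) |h|), by positivity, le_max_left _ _, ?_⟩
  intro s hs u u' hu u0 u1
  have hs1 : 1 ≤ s := (le_max_left _ _).trans hs
  have hs2 : 4 * B * (b - a) ≤ s := (le_max_left _ _).trans ((le_max_right _ _).trans hs)
  have hs3 : |h| ≤ s := (le_max_right _ _).trans ((le_max_right _ _).trans hs)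
  have hs0 : 0 < s := by linarith
  have key := sl_asym hab hB0 hB hs1 hs2 hs3 hu u0 u1
  refine ⟨fun x hx => ⟨(key x hx).1, (key x hx).2.1.trans ?_, (key x hx).2.2.trans ?_, ?_⟩, ?_⟩
  · gcongr; linarith
  · linarith
  · have hd : ∀ x ∈ Icc a b, HasDerivWithinAt (fun x => s ^ 2 * (∫ t in a..x, u t) + u' x) (q x * u x)
        (Icc a b) x := by
      intro x hx
      exact (((sl_ftc hu.cont x hx).const_mul (s ^ 2)).add (hu.2 x hx)).congr_deriv (by ring)
    have h1 := sl_mvt hd (C := B * 4) (fun t ht => by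
      rw [abs_mul]
      exact mul_le_mul (hB t ht) (key t ht).1 (abs_nonneg _) hB0) hx (by positivity)
    simp only [intervalIntegral.integral_same, u1, mul_zero, zero_add] at h1
    have h2 := (key x hx).2.2
    rw [le_div_iff₀ (by positivity), ← sl_abs_mul _ _ (pow_pos hs0 2)]
    have h3 : ((∫ t in a..x, u t) - Real.sin (s * (x - a)) / s) * s ^ 2
        = (s ^ 2 * (∫ t in a..x, u t) + u' x - h) + h - (u' x + s * Real.sin (s * (x - a))) := by
      field_simp
      ring
    rw [h3]
    rw [sub_eq_add_neg]
    refine (abs_add_le _ _).trans ?_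
    rw [abs_neg]
    have h4 := abs_add_le (s ^ 2 * (∫ t in a..x, u t) + u' x - h) h
    linarith
  · have hd : ∀ x ∈ Icc a b, HasDerivWithinAt (fun x => (∫ t in a..x, u t ^ 2) - (x - a) / 2
        - Real.sin (2 * s * (x - a)) / (4 * s)) (u x ^ 2 - Real.cos (s * (x - a)) ^ 2) (Icc a b) x := by
      intro x hx
      refine (((sl_ftc (hu.cont.pow 2) x hx).sub ((((hasDerivAt_id x).sub_const a).div_const
        2).hasDerivWithinAt)).sub ((sl_dsin (2 * s) a x _).div_const (4 * s))).congr_deriv ?_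
      rw [Real.cos_sq, show 2 * (s * (x - a)) = 2 * s * (x - a) by ring]
      simp only [Pi.pow_apply]
      field_simp
      ring
    have h1 := sl_mvt hd (C := 5 * (C0 / s)) (fun t ht => by
      rw [sq_sub_sq, abs_mul]
      refine mul_le_mul ?_ (key t ht).2.1 (abs_nonneg _) (by norm_num)
      have := abs_add_le (u t) (Real.cos (s * (t - a)))
      have := (key t ht).1
      have := Real.abs_cos_le_one (s * (t - a))
      linarith) (right_mem_Icc.2 hab.le) (by positivity)
    simp only [intervalIntegral.integral_same, sub_self, zero_div, mul_zero, Real.sin_zero,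
      sub_zero] at h1
    have h2 : |Real.sin (2 * s * (b - a)) / (4 * s)| ≤ 1 / s := by
      rw [abs_div, abs_of_pos (by positivity : 0 < 4 * s)]
      apply div_le_div₀ zero_le_one (Real.abs_sin_le_one _) hs0 (by linarith)
    have h3 := abs_add_le ((∫ t in a..b, u t ^ 2) - (b - a) / 2
      - Real.sin (2 * s * (b - a)) / (4 * s)) (Real.sin (2 * s * (b - a)) / (4 * s))
    rw [sub_add_cancel] at h3
    have h4 : (5 * C0 * (b - a) + 1) / s ≤ C / s := by gcongr; linarith
    have h5 : (5 * C0 * (b - a) + 1) / s = 5 * (C0 / s) * (b - a) + 1 / s := by ring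
    linarith

end

section
variable {a b : ℝ} {q : ℝ → ℝ} {h : ℝ}

theorem sl_param (hab : a < b) (hq : ContinuousOn q (Icc a b)) {U U' : ℝ → ℝ → ℝ}
    (hU : ∀ s, SLSol a b (fun x => q x - s ^ 2) (U s) (U' s)) (h0 : ∀ s, U s a = 1)
    (h1 : ∀ s, U' s a = h) : Continuous (fun s => U s b) ∧ Continuous (fun s => U' s b) := by
  obtain ⟨B, hB0, hB⟩ := sl_bdd hq
  have main : Continuous (fun s => (U s b, U' s b)) := by
    rw [continuous_iff_continuousAt]
    intro s0
    obtain ⟨M, hM0, hM⟩ := sl_bdd (hU s0).cont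
    set K := max 1 (B + (|s0| + 1) ^ 2) with hK
    have hK1 : 1 ≤ K := le_max_left _ _
    have hK0 : K ≠ 0 := by linarith
    have est : ∀ s, |s - s0| ≤ 1 → ‖(U s b, U' s b) - (U s0 b, U' s0 b)‖
        ≤ (|s0 ^ 2 - s ^ 2| * M) / K * (Real.exp (K * (b - a)) - 1) := by
      intro s hs
      have hsb : |s| ≤ |s0| + 1 := by
        have := abs_add_le (s - s0) s0
        rw [sub_add_cancel] at this
        linarith
      have := norm_le_gronwallBound_of_norm_deriv_right_le
        (f := fun x => (U s x - U s0 x, U' s x - U' s0 x))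
        (f' := fun x => (U' s x - U' s0 x, (q x - s ^ 2) * U s x - (q x - s0 ^ 2) * U s0 x))
        (δ := 0) (K := K) (ε := |s0 ^ 2 - s ^ 2| * M) (a := a) (b := b)
        (((hU s).cont.sub (hU s0).cont).prodMk ((hU s).cont'.sub (hU s0).cont'))
        (fun x hx => sl_Ici_of_Icc hx
          ((((hU s).1 x (Ico_subset_Icc_self hx)).sub ((hU s0).1 x (Ico_subset_Icc_self hx))).prodMk
          (((hU s).2 x (Ico_subset_Icc_self hx)).sub ((hU s0).2 x (Ico_subset_Icc_self hx)))))
        (by simp [h0, h1]) ?_ b (right_mem_Icc.2 hab.le)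
      · rw [gronwallBound_of_K_ne_0 hK0] at this
        simpa using this
      · intro x hx
        have hx' := Ico_subset_Icc_self hx
        rw [Prod.norm_def, Prod.norm_def]
        simp only [Real.norm_eq_abs]
        have hε : 0 ≤ |s0 ^ 2 - s ^ 2| * M := by positivity
        set N := max |U s x - U s0 x| |U' s x - U' s0 x| with hN
        have hN0 : 0 ≤ N := le_max_of_le_left (abs_nonneg _)
        apply max_le
        · have : |U' s x - U' s0 x| ≤ N := le_max_right _ _
          nlinarith
        · have e : (q x - s ^ 2) * U s x - (q x - s0 ^ 2) * U s0 x
              = (q x - s ^ 2) * (U s x - U s0 x) + (s0 ^ 2 - s ^ 2) * U s0 x := by ring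
          rw [e]
          refine (abs_add_le _ _).trans ?_
          rw [abs_mul, abs_mul]
          refine add_le_add (mul_le_mul ?_ (le_max_left _ _) (abs_nonneg _) (by linarith))
            (mul_le_mul_of_nonneg_left (hM x hx') (abs_nonneg _))
          refine le_trans ?_ (le_max_right _ _)
          have h2 := abs_add_le (q x) (-(s ^ 2))
          rw [← sub_eq_add_neg] at h2
          have h3 : |-(s ^ 2)| ≤ (|s0| + 1) ^ 2 := by
            rw [abs_neg, abs_pow]
            gcongr
          have := hB x hx'
          linarith
    rw [ContinuousAt, tendsto_iff_norm_sub_tendsto_zero]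
    apply squeeze_zero' (Eventually.of_forall fun _ => norm_nonneg _)
    · filter_upwards [Metric.closedBall_mem_nhds s0 zero_lt_one] with s hs
      exact est s (by simpa [Real.dist_eq] using hs)
    · have hc : Continuous (fun s : ℝ => (|s0 ^ 2 - s ^ 2| * M) / K * (Real.exp (K * (b - a)) - 1)) := by
        fun_prop
      have := hc.tendsto s0
      simpa using this
  exact ⟨continuous_fst.comp main, continuous_snd.comp main⟩

theorem sl_bc (β : ℝ) : ∃ δ K : ℝ, ∃ e0 e1 : ℝ → ℝ, 0 ≤ δ ∧ δ < 1 ∧ 0 ≤ K ∧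
    ContinuousOn e0 (Ioi 0) ∧ ContinuousOn e1 (Ioi 0) ∧
    (∀ s, 0 < s → ∀ A A' : ℝ, e0 s * A + e1 s * A' = 0 ↔ A * Real.cos β + A' * Real.sin β = 0) ∧
    ∀ s C θ A A' : ℝ, 0 < s → |A| ≤ 4 → |A - Real.cos θ| ≤ C / s → |A' + s * Real.sin θ| ≤ C →
      |e0 s * A + e1 s * A' - Real.sin (θ - δ * Real.pi)| ≤ (C + K) / s := by
  by_cases hβ : Real.sin β = 0
  · have hc : Real.cos β ≠ 0 := by
      intro h0
      have := Real.sin_sq_add_cos_sq β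
      rw [h0, hβ] at this
      norm_num at this
    refine ⟨1 / 2, 0, fun _ => -1, fun _ => 0, by norm_num, by norm_num, le_rfl, continuousOn_const,
      continuousOn_const, ?_, ?_⟩
    · intro s _ A A'
      rw [hβ]
      constructor
      · intro h
        have : A = 0 := by linarith
        rw [this]; ring
      · intro h
        have : A * Real.cos β = 0 := by linarith
        have := (mul_eq_zero.1 this).resolve_right hc
        rw [this]; ring
    · intro s C θ A A' hs _ h1 _
      rw [show θ - 1 / 2 * Real.pi = -(Real.pi / 2 - θ) by ring, Real.sin_neg,
        Real.sin_pi_div_two_sub, add_zero]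
      rw [← abs_neg] at h1
      convert h1 using 2
      ring
  · set κ := Real.cos β / Real.sin β with hκ
    refine ⟨0, 4 * |κ|, fun s => -κ / s, fun s => -1 / s, le_rfl, by norm_num, by positivity, ?_, ?_,
      ?_, ?_⟩
    · exact continuousOn_const.div continuousOn_id (fun s hs => (ne_of_gt hs))
    · exact continuousOn_const.div continuousOn_id (fun s hs => (ne_of_gt hs))
    · intro s hs A A'
      have e : A * Real.cos β + A' * Real.sin β = (-κ / s * A + -1 / s * A') * (-s * Real.sin β) := by
        rw [hκ]; field_simp; ring
      rw [e]
      constructor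
      · intro h; rw [h, zero_mul]
      · intro h
        exact (mul_eq_zero.1 h).resolve_right (mul_ne_zero (by linarith) hβ)
    · intro s C θ A A' hs h0 _ h2
      rw [zero_mul, sub_zero, le_div_iff₀ hs, ← sl_abs_mul _ _ hs]
      have e : (-κ / s * A + -1 / s * A' - Real.sin θ) * s = -(A' + s * Real.sin θ) + -(κ * A) := by
        field_simp; ring
      rw [e]
      refine (abs_add_le _ _).trans ?_
      rw [abs_neg, abs_neg, abs_mul]
      have := mul_le_mul_of_nonneg_left h0 (abs_nonneg κ)
      linarith

theorem sl_round {z ε : ℝ} (h : |Real.sin z| ≤ ε) :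
    |z - round (z / Real.pi) * Real.pi| ≤ Real.pi / 2 * ε := by
  set m := round (z / Real.pi) with hm
  have hpi := Real.pi_pos
  have h1 : |z - m * Real.pi| ≤ Real.pi / 2 := by
    have := abs_sub_round (z / Real.pi)
    rw [← hm] at this
    have e : z - m * Real.pi = (z / Real.pi - m) * Real.pi := by field_simp
    rw [e, sl_abs_mul _ _ hpi]
    nlinarith
  have h2 := Real.mul_abs_le_abs_sin h1
  rw [Real.sin_sub_int_mul_pi, abs_mul] at h2
  have h3 : |((-1 : ℝ) ^ m)| = 1 := by
    rw [abs_zpow, abs_neg, abs_one, one_zpow]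
  rw [h3, one_mul] at h2
  have h4 := h2.trans h
  rw [div_mul_eq_mul_div, div_le_iff₀ hpi] at h4
  linarith
end

theorem sl_abs_sin_sub (x y : ℝ) : |Real.sin x - Real.sin y| ≤ |x - y| := by
  rw [Real.sin_sub_sin, abs_mul, abs_mul, abs_two]
  have h1 : |Real.sin ((x - y) / 2)| ≤ |(x - y) / 2| := Real.abs_sin_le_abs
  have h2 := Real.abs_cos_le_one ((x + y) / 2)
  have h3 : |(x - y) / 2| = |x - y| / 2 := by rw [abs_div, abs_two]
  have := mul_le_mul h1 h2 (abs_nonneg _) (abs_nonneg _)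
  linarith

theorem sl_abs_cos_sub (x y : ℝ) : |Real.cos x - Real.cos y| ≤ |x - y| := by
  rw [← Real.sin_add_pi_div_two, ← Real.sin_add_pi_div_two]
  refine (sl_abs_sin_sub _ _).trans (le_of_eq ?_)
  congr 1; ring

theorem sl_tri (x y z : ℝ) : |x - z| ≤ |x - y| + |y - z| := abs_sub_le x y z

theorem sl_term_est {L d C1 C4 C7 : ℝ} (hL : 0 < L) (hd : 0 < d) (h1 : 0 ≤ C1) (h4 : 0 ≤ C4)
    (h7 : 0 ≤ C7) : ∃ K : ℝ, 0 ≤ K ∧ ∀ s σ A P I x T : ℝ, 1 ≤ s → d ≤ σ → |s - σ| ≤ C4 / s →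
      |A - 2 / L| ≤ C7 / s → |P| ≤ 4 → |P - Real.cos (s * x)| ≤ C1 / s →
      |I - Real.sin (s * T) / s| ≤ C1 / s ^ 2 → 0 ≤ x → x ≤ L → 0 ≤ T → T ≤ L →
      |A * P * I - 2 / L * Real.cos (σ * x) * (Real.sin (σ * T) / σ)| ≤ K / s ^ 2 := by
  set C5 := C1 + C4 * L + C4 / d with hC5
  set C6 := 1 + C4 / d with hC6
  have hC50 : 0 ≤ C5 := by positivity
  have hC60 : 0 ≤ C6 := by positivity
  refine ⟨C7 * 4 * (C5 + C6) + 2 / L * (C1 + C4 * L) * (C5 + C6) + 2 / L * 1 * C5, by positivity, ?_⟩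
  intro s σ A P I x T hs hσ hsσ hA hP hPc hI hx0 hxL hT0 hTL
  have hs0 : 0 < s := by linarith
  have hσ0 : 0 < σ := by linarith
  have hLip : ∀ w, 0 ≤ w → w ≤ L → |s * w - σ * w| ≤ C4 * L / s := by
    intro w hw hwL
    rw [← sub_mul, abs_mul, abs_of_nonneg hw]
    calc _ ≤ C4 / s * L := mul_le_mul hsσ hwL hw (by positivity)
      _ = _ := by ring
  have eP : |P - Real.cos (σ * x)| ≤ (C1 + C4 * L) / s := by
    have := sl_tri P (Real.cos (s * x)) (Real.cos (σ * x))
    have := (sl_abs_cos_sub (s * x) (σ * x)).trans (hLip x hx0 hxL)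
    rw [add_div]
    linarith
  have eI0 : |Real.sin (s * T) / s - Real.sin (σ * T) / σ| ≤ (C4 * L + C4 / d) / s ^ 2 := by
    have e : Real.sin (s * T) / s - Real.sin (σ * T) / σ =
        (Real.sin (s * T) - Real.sin (σ * T)) / s + Real.sin (σ * T) * ((σ - s) / (s * σ)) := by
      field_simp; ring
    rw [e]
    refine (abs_add_le _ _).trans ?_
    have f1 : |(Real.sin (s * T) - Real.sin (σ * T)) / s| ≤ C4 * L / s / s := by
      rw [abs_div, abs_of_pos hs0]
      have := (sl_abs_sin_sub (s * T) (σ * T)).trans (hLip T hT0 hTL)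
      gcongr
    have f2 : |Real.sin (σ * T) * ((σ - s) / (s * σ))| ≤ 1 * (C4 / s / (s * d)) := by
      rw [abs_mul, abs_div, abs_of_pos (mul_pos hs0 hσ0), abs_sub_comm]
      have := Real.abs_sin_le_one (σ * T)
      gcongr
    have e2 : (C4 * L + C4 / d) / s ^ 2 = C4 * L / s / s + 1 * (C4 / s / (s * d)) := by
      field_simp
    linarith
  have eI : |I - Real.sin (σ * T) / σ| ≤ C5 / s ^ 2 := by
    have := sl_tri I (Real.sin (s * T) / s) (Real.sin (σ * T) / σ)
    have e : C5 / s ^ 2 = C1 / s ^ 2 + (C4 * L + C4 / d) / s ^ 2 := by rw [hC5]; ring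
    linarith
  have hσs : 1 / σ ≤ C6 / s := by
    rw [div_le_div_iff₀ hσ0 hs0, one_mul]
    have f1 : C4 / s ≤ C4 := div_le_self h4 hs
    have f2 : s - σ ≤ C4 := (le_abs_self _).trans (hsσ.trans f1)
    have f3 : C4 ≤ C4 / d * σ := by
      rw [div_mul_eq_mul_div, le_div_iff₀ hd]
      gcongr
    rw [hC6]
    linarith
  have hI0 : |Real.sin (σ * T) / σ| ≤ C6 / s := by
    refine le_trans ?_ hσs
    rw [abs_div, abs_of_pos hσ0]
    have := Real.abs_sin_le_one (σ * T)
    gcongr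
  have hI' : |I| ≤ (C5 + C6) / s := by
    have f1 := abs_add_le (I - Real.sin (σ * T) / σ) (Real.sin (σ * T) / σ)
    rw [sub_add_cancel] at f1
    have f2 : C5 / s ^ 2 ≤ C5 / s := by
      gcongr
      nlinarith
    rw [add_div]
    linarith
  have e : A * P * I - 2 / L * Real.cos (σ * x) * (Real.sin (σ * T) / σ)
      = (A - 2 / L) * P * I + 2 / L * (P - Real.cos (σ * x)) * I
        + 2 / L * Real.cos (σ * x) * (I - Real.sin (σ * T) / σ) := by ring
  rw [e]
  refine (abs_add_three _ _ _).trans ?_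
  have hL2 : |2 / L| = 2 / L := abs_of_pos (by positivity)
  have g1 : |(A - 2 / L) * P * I| ≤ C7 / s * 4 * ((C5 + C6) / s) := by
    rw [abs_mul, abs_mul]; gcongr
  have g2 : |2 / L * (P - Real.cos (σ * x)) * I| ≤ 2 / L * ((C1 + C4 * L) / s) * ((C5 + C6) / s) := by
    rw [abs_mul, abs_mul, hL2]; gcongr
  have g3 : |2 / L * Real.cos (σ * x) * (I - Real.sin (σ * T) / σ)| ≤ 2 / L * 1 * (C5 / s ^ 2) := by
    rw [abs_mul, abs_mul, hL2]
    have := Real.abs_cos_le_one (σ * x)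
    gcongr
  calc _ ≤ _ := add_le_add (add_le_add g1 g2) g3
    _ = _ := by field_simp

theorem SLSol.eq_zero' {a b : ℝ} {Q z z' : ℝ → ℝ} (hab : a < b) (hQ : ContinuousOn Q (Icc a b))
    (h : SLSol a b Q z z') (h0 : z a = 0) (h1 : z' a = 0) :
    ∀ x ∈ Icc a b, z x = 0 ∧ z' x = 0 := by
  intro x hx
  have hz := h.eq_zero hQ h0 h1
  refine ⟨hz x hx, ?_⟩
  have hd : HasDerivWithinAt z 0 (Icc a b) x :=
    (hasDerivWithinAt_const x (Icc a b) (0:ℝ)).congr hz (hz x hx)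
  exact (uniqueDiffOn_Icc hab x hx).eq_deriv _ (h.1 x hx) hd

theorem SLData.rep {a b : ℝ} {q : ℝ → ℝ} {h β : ℝ} {lam : ℕ → ℝ} {y y' : ℕ → ℝ → ℝ}
    (D : SLData a b q h β lam y y') {n : ℕ} {s : ℝ} (hs : lam n = s ^ 2) {u u' : ℝ → ℝ}
    (hu : SLSol a b (fun x => q x - s ^ 2) u u') (u0 : u a = 1) (u1 : u' a = h) :
    ∀ x ∈ Icc a b, y n x = y n a * u x ∧ y' n x = y n a * u' x := by
  intro x hx
  rw [← hs] at hu
  have := ((D.sol n).lin hu 1 (-y n a)).eq_zero' D.hab (D.hq.sub continuousOn_const)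
    (by rw [u0]; ring) (by rw [u1, D.bca]; ring) x hx
  constructor
  · linarith [this.1]
  · linarith [this.2]

section
variable {a b : ℝ} {q : ℝ → ℝ} {h β : ℝ} {lam : ℕ → ℝ} {y y' : ℕ → ℝ → ℝ}

theorem sl_ivt {D : ℝ → ℝ} {L δ C s0 : ℝ} (hL : 0 < L) (hδ : 0 ≤ δ) (hs0 : 1 ≤ s0) (hC : 0 ≤ C)
    (hc : ContinuousOn D (Ioi 0))
    (hD : ∀ s, s0 ≤ s → |D s - Real.sin (s * L - δ * Real.pi)| ≤ C / s) :
    ∃ M0 : ℤ, ∀ M : ℤ, M0 ≤ M → ∃ s, s0 ≤ s ∧ D s = 0 ∧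
      round ((s * L - δ * Real.pi) / Real.pi) = M := by
  have hpi := Real.pi_pos
  obtain ⟨M0, hM0⟩ := exists_nat_gt ((s0 + C) * L / Real.pi + 1)
  refine ⟨M0, fun M hM => ?_⟩
  have hM1 : (M0 : ℝ) ≤ M := by exact_mod_cast hM
  set s1 := (M + δ - 1 / 2) * Real.pi / L with hs1
  set s2 := (M + δ + 1 / 2) * Real.pi / L with hs2
  have h12 : s1 ≤ s2 := by rw [hs1, hs2]; gcongr; linarith
  have hs1' : s0 + C < s1 := by
    rw [hs1, lt_div_iff₀ hL]
    have : (s0 + C) * L / Real.pi + 1 / 2 < M + δ := by linarith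
    have h3 : (s0 + C) * L / Real.pi < M + δ - 1 / 2 := by linarith
    rwa [div_lt_iff₀ hpi] at h3
  have e1 : s1 * L - δ * Real.pi = (M : ℝ) * Real.pi - Real.pi / 2 := by
    rw [hs1]; field_simp; ring
  have e2 : s2 * L - δ * Real.pi = Real.pi / 2 + M * Real.pi := by
    rw [hs2]; field_simp; ring
  have d1 := hD s1 (by linarith)
  have d2 := hD s2 (by linarith)
  have g1 : C / s1 < 1 := by rw [div_lt_one (by linarith)]; linarith
  have g2 : C / s2 < 1 := by rw [div_lt_one (by linarith)]; linarith
  rw [e1, Real.sin_sub_pi_div_two, Real.cos_int_mul_pi] at d1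
  rw [e2, Real.sin_add_int_mul_pi, Real.sin_pi_div_two, mul_one] at d2
  have hcc : ContinuousOn D (Icc s1 s2) := hc.mono (fun s hs => by
    have := hs.1
    show 0 < s
    linarith)
  have d1' := abs_lt.1 (d1.trans_lt g1)
  have d2' := abs_lt.1 (d2.trans_lt g2)
  have hex : ∃ s ∈ Icc s1 s2, D s = 0 ∧ s ≠ s1 ∧ s ≠ s2 := by
    have hpar : ((-1 : ℝ) ^ M = 1) ∨ ((-1 : ℝ) ^ M = -1) := by
      rcases Int.even_or_odd M with hk | hk
      · exact Or.inl hk.neg_one_zpow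
      · exact Or.inr hk.neg_one_zpow
    rcases hpar with hk | hk
    · rw [hk] at d1' d2'
      have := intermediate_value_Icc h12 hcc (show (0:ℝ) ∈ Icc (D s1) (D s2) from
        ⟨by linarith [d1'.2], by linarith [d2'.1]⟩)
      obtain ⟨s, hs, hs0⟩ := this
      refine ⟨s, hs, hs0, ?_, ?_⟩
      · rintro rfl; linarith [d1'.2]
      · rintro rfl; linarith [d2'.1]
    · rw [hk] at d1' d2'
      have := intermediate_value_Icc' h12 hcc (show (0:ℝ) ∈ Icc (D s2) (D s1) from
        ⟨by linarith [d2'.2], by linarith [d1'.1]⟩)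
      obtain ⟨s, hs, hs0⟩ := this
      refine ⟨s, hs, hs0, ?_, ?_⟩
      · rintro rfl; linarith [d1'.1]
      · rintro rfl; linarith [d2'.2]
  obtain ⟨s, hs, hDs, n1, n2⟩ := hex
  have l1 : s1 < s := lt_of_le_of_ne hs.1 (Ne.symm n1)
  have l2 : s < s2 := lt_of_le_of_ne hs.2 n2
  refine ⟨s, by linarith, hDs, ?_⟩
  rw [round_eq, Int.floor_eq_iff]
  have k1 : s1 * L < s * L := by gcongr
  have k2 : s * L < s2 * L := by gcongr
  constructor
  · have : (M : ℝ) - 1 / 2 ≤ (s * L - δ * Real.pi) / Real.pi := by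
      rw [le_div_iff₀ hpi]; linarith
    linarith
  · have : (s * L - δ * Real.pi) / Real.pi < M + 1 / 2 := by
      rw [div_lt_iff₀ hpi]; linarith
    linarith

theorem SLData.location (D : SLData a b q h β lam y y') :
    ∃ δ C C1 s0 : ℝ, ∃ U U' : ℝ → ℝ → ℝ, 0 ≤ C ∧ 0 ≤ C1 ∧ 1 ≤ s0 ∧ 0 ≤ δ ∧
      (∀ s, SLSol a b (fun x => q x - s ^ 2) (U s) (U' s) ∧ U s a = 1 ∧ U' s a = h) ∧
      (∀ s, s0 ≤ s → (∀ x ∈ Icc a b, |U s x| ≤ 4 ∧ |U s x - Real.cos (s * (x - a))| ≤ C1 / s ∧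
        |(∫ t in a..x, U s t) - Real.sin (s * (x - a)) / s| ≤ C1 / s ^ 2) ∧
        |(∫ t in a..b, U s t ^ 2) - (b - a) / 2| ≤ C1 / s) ∧
      (∀ n, s0 ≤ √(lam n) → |√(lam n) * (b - a) - δ * Real.pi
        - round ((√(lam n) * (b - a) - δ * Real.pi) / Real.pi) * Real.pi| ≤ C / √(lam n)) ∧
      (∃ M0 : ℤ, ∀ M : ℤ, M0 ≤ M → ∃ n,
        round ((√(lam n) * (b - a) - δ * Real.pi) / Real.pi) = M) := by
  obtain ⟨C1, s0, hC1, hs0, has⟩ := sl_asym2 D.hab D.hq h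
  have hex : ∀ s : ℝ, ∃ z z', SLSol a b (fun x => q x - s ^ 2) z z' ∧ z a = 1 ∧ z' a = h :=
    fun s => sl_exists_a D.hab.le (D.hq.sub continuousOn_const) 1 h
  choose U U' hU using hex
  obtain ⟨δ, K, e0, e1, hδ0, hδ1, hK, c0, c1, hiff, hest⟩ := sl_bc β
  obtain ⟨cU, cU'⟩ := sl_param D.hab D.hq (fun s => (hU s).1) (fun s => (hU s).2.1)
    (fun s => (hU s).2.2)
  have hA := fun s hs => has s hs (U s) (U' s) (hU s).1 (hU s).2.1 (hU s).2.2
  set Df : ℝ → ℝ := fun s => e0 s * U s b + e1 s * U' s b with hDf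
  have hDc : ContinuousOn Df (Ioi 0) :=
    (c0.mul cU.continuousOn).add (c1.mul cU'.continuousOn)
  have hb := right_mem_Icc.2 D.hab.le
  have hDe : ∀ s, s0 ≤ s → |Df s - Real.sin (s * (b - a) - δ * Real.pi)| ≤ (C1 + K) / s := by
    intro s hs
    have := (hA s hs).1 b hb
    exact hest s C1 _ _ _ (by linarith) this.1 this.2.1 this.2.2.1
  have hpi := Real.pi_pos
  refine ⟨δ, Real.pi / 2 * (C1 + K), C1, s0, U, U', by positivity, hC1, hs0, hδ0, hU, ?_, ?_, ?_⟩
  · intro s hs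
    refine ⟨fun x hx => ?_, (hA s hs).2⟩
    have := (hA s hs).1 x hx
    exact ⟨this.1, this.2.1, this.2.2.2⟩
  · intro n hn
    have hpos : 0 < √(lam n) := by linarith
    have hsq : lam n = √(lam n) ^ 2 := (Real.sq_sqrt (Real.sqrt_pos.1 hpos).le).symm
    have hr := D.rep hsq (hU _).1 (hU _).2.1 (hU _).2.2 b hb
    have hD0 : Df (√(lam n)) = 0 := by
      rw [hDf]
      simp only
      rw [hiff _ hpos]
      have h1 := D.bcb n
      rw [hr.1, hr.2] at h1
      have h2 := D.ne_zero n
      have : y n a * (U (√(lam n)) b * Real.cos β + U' (√(lam n)) b * Real.sin β) = 0 := by linarith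
      exact (mul_eq_zero.1 this).resolve_left h2
    have h3 := hDe _ hn
    rw [hD0, zero_sub, abs_neg] at h3
    have := sl_round h3
    rw [mul_div_assoc]
    exact this
  · obtain ⟨M0, hM0⟩ := sl_ivt (sub_pos.2 D.hab) hδ0 hs0 (by positivity) hDc hDe
    refine ⟨M0, fun M hM => ?_⟩
    obtain ⟨s, hs, hDs, hr⟩ := hM0 M hM
    have hspos : 0 < s := by linarith
    obtain ⟨n, hn⟩ := D.complete (s ^ 2) (U s) (U' s) (hU s).1 (by rw [(hU s).2.1, (hU s).2.2]; ring)
      ((hiff s hspos _ _).1 hDs) ⟨a, left_mem_Icc.2 D.hab.le, by rw [(hU s).2.1]; norm_num⟩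
    refine ⟨n, ?_⟩
    rw [hn, Real.sqrt_sq hspos.le]
    exact hr

end

section
variable {a b : ℝ} {q : ℝ → ℝ} {h β : ℝ} {lam : ℕ → ℝ} {y y' : ℕ → ℝ → ℝ}

theorem SLData.terms (D : SLData a b q h β lam y y') :
    ∃ n1 : ℕ, ∃ c C : ℝ, 1 ≤ c ∧ 0 ≤ C ∧ ∀ j : ℕ, ∀ x ∈ Icc a b, ∀ T ∈ Icc a b,
      |y (n1 + j) x * (∫ t in a..T, y (n1 + j) t) -
        2 / (b - a) * Real.cos ((c + j) * Real.pi / (b - a) * (x - a)) *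
        (Real.sin ((c + j) * Real.pi / (b - a) * (T - a)) / ((c + j) * Real.pi / (b - a)))|
        ≤ C / ((j : ℝ) + 1) ^ 2 := by
  obtain ⟨δ, C, C1, s0, U, U', hC, hC1, hs0, hδ, hU, hA, hloc, M0, hM0⟩ := D.location
  have hpi := Real.pi_pos
  have hL : 0 < b - a := sub_pos.2 D.hab
  set L := b - a with hLdef
  set S : ℕ → ℝ := fun n => √(lam n) with hS
  set m : ℕ → ℤ := fun n => round ((S n * L - δ * Real.pi) / Real.pi) with hm
  have hSmono : Monotone S := fun i j hij => Real.sqrt_le_sqrt (D.mono.monotone hij)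
  have hStend : Tendsto S atTop atTop := Real.tendsto_sqrt_atTop.comp D.tendsto
  have hmmono : Monotone m := by
    intro i j hij
    show round _ ≤ round _
    rw [round_eq, round_eq]
    apply Int.floor_mono
    have := hSmono hij
    gcongr
  have hround : ∀ n, |(S n * L - δ * Real.pi) / Real.pi - m n| ≤ 1 / 2 := fun n => abs_sub_round _
  -- distance to the reference frequencies
  have hσ : ∀ n, s0 ≤ S n → |S n - (m n + δ) * Real.pi / L| ≤ C / L / S n := by
    intro n hn
    have h1 := hloc n hn
    have hSn : 0 < S n := by linarith
    have e : S n - (m n + δ) * Real.pi / L = (S n * L - δ * Real.pi - m n * Real.pi) / L := by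
      field_simp; ring
    rw [e, abs_div, abs_of_pos hL, div_right_comm]
    gcongr
  have hrep : ∀ n, s0 ≤ S n → ∀ x ∈ Icc a b, y n x = y n a * U (S n) x := by
    intro n hn x hx
    have hSn : 0 < S n := by linarith
    have hsq : lam n = S n ^ 2 := (Real.sq_sqrt (Real.sqrt_pos.1 hSn).le).symm
    exact (D.rep hsq (hU _).1 (hU _).2.1 (hU _).2.2 x hx).1
  have hcU : ∀ s, ContinuousOn (U s) (Icc a b) := fun s => (hU s).1.cont
  have hii : ∀ {g : ℝ → ℝ}, ContinuousOn g (Icc a b) → IntervalIntegrable g volume a b := by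
    intro g hg
    apply ContinuousOn.intervalIntegrable
    rwa [uIcc_of_le D.hab.le]
  -- injectivity
  set R := max s0 ((C1 + 4 * L * (2 * C1 + 2 * C)) * 4 / L + 1) with hR
  have hinj : ∀ n, R ≤ S n → m (n + 1) ≠ m n := by
    intro n hn heq
    have hn0 : s0 ≤ S n := (le_max_left _ _).trans hn
    have hn1 : (C1 + 4 * L * (2 * C1 + 2 * C)) * 4 / L + 1 ≤ S n := (le_max_right _ _).trans hn
    have hnn : S n ≤ S (n + 1) := hSmono (Nat.le_succ n)
    have hn0' : s0 ≤ S (n + 1) := hn0.trans hnn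
    have hSn : 0 < S n := by linarith
    have d1 := hσ n hn0
    have d2 := hσ (n + 1) hn0'
    rw [heq, abs_sub_comm] at d2
    have d3 : C / L / S (n + 1) ≤ C / L / S n := by gcongr
    have d4 : |S n - S (n + 1)| ≤ 2 * C / L / S n := by
      have := sl_tri (S n) ((m n + δ) * Real.pi / L) (S (n + 1))
      have e : 2 * C / L / S n = C / L / S n + C / L / S n := by ring
      linarith
    have hdiff : ∀ x ∈ Icc a b, |U (S n) x - U (S (n + 1)) x| ≤ (2 * C1 + 2 * C) / S n := by
      intro x hx
      have f1 := ((hA _ hn0).1 x hx).2.1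
      have f2 := ((hA _ hn0').1 x hx).2.1
      rw [abs_sub_comm] at f2
      have f3 : C1 / S (n + 1) ≤ C1 / S n := by gcongr
      have f4 : |Real.cos (S n * (x - a)) - Real.cos (S (n + 1) * (x - a))| ≤ 2 * C / S n := by
        refine (sl_abs_cos_sub _ _).trans ?_
        have hxa : 0 ≤ x - a := by linarith [hx.1]
        rw [← sub_mul, abs_mul, abs_of_nonneg hxa]
        calc _ ≤ 2 * C / L / S n * L := by
              refine mul_le_mul d4 ?_ hxa (by positivity)
              rw [hLdef]; linarith [hx.2]
          _ = _ := by field_simp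
      have f5 := sl_tri (U (S n) x) (Real.cos (S n * (x - a))) (U (S (n + 1)) x)
      have f6 := sl_tri (Real.cos (S n * (x - a))) (Real.cos (S (n + 1) * (x - a))) (U (S (n + 1)) x)
      have e : (2 * C1 + 2 * C) / S n = C1 / S n + 2 * C / S n + C1 / S n := by ring
      linarith
    have hort : ∫ x in a..b, U (S n) x * U (S (n + 1)) x = 0 := by
      have h0 := D.ortho (Nat.succ_ne_self n).symm
      rw [intervalIntegral.integral_congr
        (g := fun x => (y n a * y (n + 1) a) * (U (S n) x * U (S (n + 1)) x)),
        intervalIntegral.integral_const_mul] at h0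
      · exact (mul_eq_zero.1 h0).resolve_left (mul_ne_zero (D.ne_zero _) (D.ne_zero _))
      · intro x hx
        rw [uIcc_of_le D.hab.le] at hx
        simp only
        rw [hrep n hn0 x hx, hrep (n + 1) hn0' x hx]
        ring
    have hle : |∫ x in a..b, (U (S n) x ^ 2 - U (S n) x * U (S (n + 1)) x)|
        ≤ 4 * ((2 * C1 + 2 * C) / S n) * |b - a| := by
      rw [← Real.norm_eq_abs]
      apply intervalIntegral.norm_integral_le_of_norm_le_const
      intro x hx
      rw [uIoc_of_le D.hab.le] at hx
      have hx' := Ioc_subset_Icc_self hx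
      rw [Real.norm_eq_abs, sq, ← mul_sub, abs_mul]
      exact mul_le_mul ((hA _ hn0).1 x hx').1 (hdiff x hx') (abs_nonneg _) (by norm_num)
    have i1 : IntervalIntegrable (fun x => U (S n) x ^ 2) volume a b := hii ((hcU _).pow 2)
    have i2 : IntervalIntegrable (fun x => U (S n) x * U (S (n+1)) x) volume a b :=
      hii ((hcU _).mul (hcU _))
    rw [intervalIntegral.integral_sub i1 i2, hort, sub_zero,
      ← hLdef, abs_of_pos hL] at hle
    have h2 := (hA _ hn0).2
    have h3 := (abs_le.1 h2).1
    have h4 := (abs_le.1 hle).2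
    have h5 : L / 2 ≤ (C1 + 4 * L * (2 * C1 + 2 * C)) / S n := by
      have e : (C1 + 4 * L * (2 * C1 + 2 * C)) / S n
        = C1 / S n + 4 * ((2 * C1 + 2 * C) / S n) * L := by ring
      linarith
    rw [le_div_iff₀ hSn] at h5
    have h6 : (C1 + 4 * L * (2 * C1 + 2 * C)) * 4 / L < S n := by linarith
    rw [div_lt_iff₀ hL] at h6
    have : 0 ≤ C1 + 4 * L * (2 * C1 + 2 * C) := by positivity
    nlinarith
  -- choice of n1
  set R2 := max R (max (4 * C1 / L) ((max (M0 : ℝ) 1 + δ + 1) * Real.pi / L)) with hR2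
  obtain ⟨n1, hn1⟩ := (hStend.eventually_ge_atTop R2).exists
  have hbig : ∀ n, n1 ≤ n → R2 ≤ S n := fun n hn => hn1.trans (hSmono hn)
  have hmbig : ∀ n, n1 ≤ n → max (M0 : ℝ) 1 ≤ m n := by
    intro n hn
    have h1 : (max (M0 : ℝ) 1 + δ + 1) * Real.pi / L ≤ S n :=
      (le_max_right _ _).trans ((le_max_right _ _).trans (hbig n hn))
    rw [div_le_iff₀ hL] at h1
    have h2 := (abs_le.1 (hround n)).2
    have h3 : max (M0 : ℝ) 1 + 1 ≤ (S n * L - δ * Real.pi) / Real.pi := by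
      rw [le_div_iff₀ hpi]; linarith
    linarith
  have hstep : ∀ n, n1 ≤ n → m (n + 1) = m n + 1 := by
    intro n hn
    have h1 : M0 ≤ m n := by
      have := (le_max_left (M0 : ℝ) 1).trans (hmbig n hn)
      exact_mod_cast this
    obtain ⟨k, hk⟩ := hM0 (m n + 1) (by omega)
    have hk' : m k = m n + 1 := hk
    have hnk : n < k := by
      by_contra hcon
      have := hmmono (not_lt.1 hcon)
      omega
    have h2 := hmmono (Nat.succ_le_of_lt hnk)
    have h3 := hmmono (Nat.le_succ n)
    have h4 := hinj n ((le_max_left _ _).trans (hbig n hn))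
    simp only [Nat.succ_eq_add_one] at h2 h3
    omega
  have hmj : ∀ j : ℕ, m (n1 + j) = m n1 + j := by
    intro j
    induction j with
    | zero => simp
    | succ k ih =>
      rw [← add_assoc, hstep (n1 + k) (Nat.le_add_right _ _), ih]
      push_cast; ring
  set c : ℝ := m n1 + δ with hc
  have hc1 : 1 ≤ c := by
    have := (le_max_right (M0 : ℝ) 1).trans (hmbig n1 le_rfl)
    linarith
  obtain ⟨K, hK0, hK⟩ := sl_term_est (L := L) (d := Real.pi / L) (C1 := C1) (C4 := C / L)
    (C7 := 8 * C1 / L ^ 2) hL (by positivity) hC1 (by positivity) (by positivity)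
  refine ⟨n1, c, K * (4 * L ^ 2 / Real.pi ^ 2), hc1, by positivity, ?_⟩
  intro j x hx T hT
  set n := n1 + j with hn
  have hnn : n1 ≤ n := Nat.le_add_right _ _
  have hRn : R ≤ S n := (le_max_left _ _).trans (hbig n hnn)
  have hn0 : s0 ≤ S n := (le_max_left _ _).trans hRn
  have hSn : 0 < S n := by linarith
  have hSC : 4 * C1 / L ≤ S n := (le_max_left _ _).trans ((le_max_right _ _).trans (hbig n hnn))
  have hcj : (c + j) = m n + δ := by rw [hn, hmj j, hc]; push_cast; ring
  have hj0 : (0:ℝ) ≤ j := Nat.cast_nonneg j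
  have hσn := hσ n hn0
  rw [← hcj] at hσn
  have hσd : Real.pi / L ≤ (c + j) * Real.pi / L := by
    gcongr
    nlinarith
  -- size of S n
  have hSj : ((j : ℝ) + 1) * (Real.pi / (2 * L)) ≤ S n := by
    have h2 := (abs_le.1 (hround n)).1
    have h3 : (m n : ℝ) - 1 / 2 ≤ (S n * L - δ * Real.pi) / Real.pi := by linarith
    rw [le_div_iff₀ hpi] at h3
    have h4 : (c + j - 1 / 2) * Real.pi ≤ S n * L := by rw [hcj]; linarith
    have h5 : ((j : ℝ) + 1) * (Real.pi / (2 * L)) = (((j : ℝ) + 1) / 2 * Real.pi) / L := by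
      field_simp
    rw [h5, div_le_iff₀ hL]
    refine le_trans ?_ h4
    gcongr
    linarith
  -- the amplitude
  have hAA : |y n a ^ 2 - 2 / L| ≤ 8 * C1 / L ^ 2 / S n := by
    have h1 : y n a ^ 2 * ∫ t in a..b, U (S n) t ^ 2 = 1 := by
      rw [← D.norm n, ← intervalIntegral.integral_const_mul]
      apply intervalIntegral.integral_congr
      intro t ht
      rw [uIcc_of_le D.hab.le] at ht
      simp only
      rw [hrep n hn0 t ht]; ring
    have h2 := (hA _ hn0).2
    set J := ∫ t in a..b, U (S n) t ^ 2 with hJ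
    have h3 : C1 / S n ≤ L / 4 := by
      rw [div_le_iff₀ hSn]
      rw [div_le_iff₀ hL] at hSC
      linarith
    have h4 : L / 4 ≤ J := by linarith [(abs_le.1 h2).1]
    have h5 : y n a ^ 2 ≤ 4 / L := by
      rw [le_div_iff₀ hL]
      nlinarith [sq_nonneg (y n a)]
    have h6 : y n a ^ 2 - 2 / L = -(y n a ^ 2 * (2 / L) * (J - L / 2)) := by
      have : 2 / L * (L / 2) = 1 := by field_simp
      linear_combination (2 / L) * h1 - (y n a ^ 2) * this
    rw [h6, abs_neg, abs_mul, abs_of_nonneg (by positivity : 0 ≤ y n a ^ 2 * (2 / L))]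
    calc _ ≤ 4 / L * (2 / L) * (C1 / S n) := by gcongr
      _ = _ := by ring
  have hint : ∫ t in a..T, y n t = y n a * ∫ t in a..T, U (S n) t := by
    rw [← intervalIntegral.integral_const_mul]
    apply intervalIntegral.integral_congr
    intro t ht
    rw [uIcc_of_le hT.1] at ht
    exact hrep n hn0 t ⟨ht.1, ht.2.trans hT.2⟩
  have hx4 := (hA _ hn0).1 x hx
  have hT4 := (hA _ hn0).1 T hT
  have hfin := hK (S n) ((c + j) * Real.pi / L) (y n a ^ 2) (U (S n) x) (∫ t in a..T, U (S n) t)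
    (x - a) (T - a) (by linarith) hσd hσn hAA hx4.1 hx4.2.1 hT4.2.2 (by linarith [hx.1])
    (by rw [hLdef]; linarith [hx.2]) (by linarith [hT.1]) (by rw [hLdef]; linarith [hT.2])
  have e : y n x * (∫ t in a..T, y n t)
      = y n a ^ 2 * U (S n) x * ∫ t in a..T, U (S n) t := by
    rw [hrep n hn0 x hx, hint]; ring
  rw [e]
  refine hfin.trans ?_
  have h8 : K / S n ^ 2 ≤ K / (((j : ℝ) + 1) * (Real.pi / (2 * L))) ^ 2 := by gcongr
  refine h8.trans (le_of_eq ?_)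
  field_simp
  norm_num
end

theorem sl_abel (w d : ℕ → ℝ) (hw : Antitone w) (hw0 : ∀ n, 0 ≤ w n) (hd : ∀ n, |d n| ≤ 1) (N : ℕ) :
    |∑ j ∈ Finset.range N, w j * (d j - d (j + 1))| ≤ 2 * w 0 := by
  have key : |∑ j ∈ Finset.range N, w j * (d j - d (j + 1)) + w N * d N| ≤ 2 * w 0 - w N := by
    induction N with
    | zero =>
      simp only [Finset.range_zero, Finset.sum_empty, zero_add]
      rw [abs_mul, abs_of_nonneg (hw0 0)]
      nlinarith [hd 0, hw0 0]
    | succ k ih =>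
      rw [Finset.sum_range_succ]
      have e : ∑ j ∈ Finset.range k, w j * (d j - d (j + 1)) + w k * (d k - d (k + 1))
          + w (k + 1) * d (k + 1) = (∑ j ∈ Finset.range k, w j * (d j - d (j + 1)) + w k * d k)
          + (w (k + 1) - w k) * d (k + 1) := by ring
      rw [e]
      refine (abs_add_le _ _).trans ?_
      have h1 : |(w (k + 1) - w k) * d (k + 1)| ≤ w k - w (k + 1) := by
        have h2 := hw (Nat.le_succ k)
        rw [abs_mul, abs_sub_comm, abs_of_nonneg (sub_nonneg.2 h2)]
        have := hd (k + 1)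
        have h3 : 0 ≤ w k - w (k + 1) := sub_nonneg.2 h2
        nlinarith
      linarith
  have h1 : |w N * d N| ≤ w N := by
    rw [abs_mul, abs_of_nonneg (hw0 N)]
    nlinarith [hd N, hw0 N]
  have h2 := abs_sub (∑ j ∈ Finset.range N, w j * (d j - d (j + 1)) + w N * d N) (w N * d N)
  rw [add_sub_cancel_right] at h2
  linarith

theorem sl_sin_tail {c θ κ : ℝ} (hc : 0 < c) (hκ : 0 < κ) (hθ : κ ≤ Real.sin (θ / 2)) (N : ℕ) :
    |∑ j ∈ Finset.range N, Real.sin ((c + j) * θ) / (c + j)| ≤ 1 / (κ * c) := by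
  have h := sl_abel (fun j => 1 / (c + j)) (fun j => Real.cos ((c + j - 1 / 2) * θ))
    (by
      intro i j hij
      have : (i : ℝ) ≤ j := by exact_mod_cast hij
      have hi : (0:ℝ) ≤ i := Nat.cast_nonneg i
      simp only
      gcongr) (fun n => by positivity) (fun n => Real.abs_cos_le_one _) N
  have e : ∑ j ∈ Finset.range N, 1 / (c + (j : ℝ)) * (Real.cos ((c + j - 1 / 2) * θ) -
      Real.cos ((c + (j + 1 : ℕ) - 1 / 2) * θ))
      = 2 * Real.sin (θ / 2) * ∑ j ∈ Finset.range N, Real.sin ((c + j) * θ) / (c + j) := by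
    rw [Finset.mul_sum]
    apply Finset.sum_congr rfl
    intro j _
    have h1 : (c + (j : ℝ) - 1 / 2) * θ = (c + j) * θ - θ / 2 := by ring
    have h2 : (c + ((j + 1 : ℕ) : ℝ) - 1 / 2) * θ = (c + j) * θ + θ / 2 := by push_cast; ring
    rw [h1, h2, Real.cos_sub, Real.cos_add]
    ring
  rw [e, abs_mul, abs_of_pos (by linarith)] at h
  simp only [Nat.cast_zero, add_zero] at h
  generalize hA : |∑ j ∈ Finset.range N, Real.sin ((c + j) * θ) / (c + j)| = A at *
  have hA0 : 0 ≤ A := by rw [← hA]; exact abs_nonneg _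
  clear hA e
  have h3 : κ * A ≤ Real.sin (θ / 2) * A := mul_le_mul_of_nonneg_right hθ hA0
  have h4 : κ * A ≤ 1 / c := by linarith
  rw [le_div_iff₀ hc] at h4
  rw [le_div_iff₀ (by positivity)]
  linarith

theorem sl_sin_bdd {c θ : ℝ} (hc : 1 ≤ c) (h0 : 0 ≤ θ) (hpi : θ ≤ Real.pi) (N : ℕ) :
    |∑ j ∈ Finset.range N, Real.sin ((c + j) * θ) / (c + j)| ≤ 1 + Real.pi := by
  have hp := Real.pi_pos
  rcases h0.eq_or_lt with rfl | hθ
  · simp; positivity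
  have hsmall : ∀ M : ℕ, (M : ℝ) * θ ≤ 1 →
      |∑ j ∈ Finset.range M, Real.sin ((c + j) * θ) / (c + j)| ≤ 1 := by
    intro M hM
    refine (Finset.abs_sum_le_sum_abs _ _).trans ?_
    refine le_trans (Finset.sum_le_card_nsmul _ _ θ ?_) ?_
    · intro j _
      have hj : (0:ℝ) ≤ j := Nat.cast_nonneg j
      have hcj : 0 < c + j := by linarith
      rw [abs_div, abs_of_pos hcj, div_le_iff₀ hcj]
      refine Real.abs_sin_le_abs.trans ?_
      rw [abs_of_pos (by positivity), mul_comm]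
    · simpa using hM
  set J := ⌊1 / θ⌋₊ with hJ
  have hJ1 : (J : ℝ) * θ ≤ 1 := by
    rw [← le_div_iff₀ hθ]
    exact Nat.floor_le (by positivity)
  have hJ2 : 1 < ((J : ℝ) + 1) * θ := by
    rw [← div_lt_iff₀ hθ]
    exact Nat.lt_floor_add_one _
  rcases le_total N J with hNJ | hNJ
  · have h1 := hsmall N (le_trans (by gcongr) hJ1)
    linarith
  · obtain ⟨k, rfl⟩ := Nat.exists_eq_add_of_le hNJ
    rw [Finset.sum_range_add]
    refine (abs_add_le _ _).trans ?_
    have h1 := hsmall J hJ1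
    have hs : θ / Real.pi ≤ Real.sin (θ / 2) := by
      have := Real.mul_le_sin (x := θ / 2) (by linarith) (by linarith)
      calc _ = 2 / Real.pi * (θ / 2) := by ring
        _ ≤ _ := this
    have hJ0 : (0:ℝ) ≤ J := Nat.cast_nonneg J
    have h2 := sl_sin_tail (c := c + J) (by linarith) (by positivity) hs k
    have h3 : 1 / (θ / Real.pi * (c + J)) ≤ Real.pi := by
      rw [div_le_iff₀ (by positivity)]
      have : Real.pi * (θ / Real.pi * (c + J)) = θ * (c + J) := by field_simp
      rw [this]
      nlinarith
    have h4 : ∑ x ∈ Finset.range k, Real.sin ((c + ((J + x : ℕ) : ℝ)) * θ) / (c + ((J + x : ℕ) : ℝ))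
      = ∑ x ∈ Finset.range k, Real.sin ((c + J + x) * θ) / (c + J + x) := by
      apply Finset.sum_congr rfl
      intro x _
      push_cast
      rw [add_assoc]
    rw [h4]
    linarith

theorem sl_sq_tail (M N : ℕ) :
    ∑ j ∈ Finset.range N, 1 / (((M + j : ℕ) : ℝ) + 1) ^ 2 ≤ 2 / ((M : ℝ) + 1) := by
  have key : ∑ j ∈ Finset.range N, 1 / (((M + j : ℕ) : ℝ) + 1) ^ 2
      ≤ 2 / ((M : ℝ) + 1) - 2 / (((M + N : ℕ) : ℝ) + 1) := by
    induction N with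
    | zero => simp
    | succ k ih =>
      rw [Finset.sum_range_succ]
      have h : 1 / (((M + k : ℕ) : ℝ) + 1) ^ 2 ≤ 2 / (((M + k : ℕ) : ℝ) + 1)
          - 2 / (((M + (k + 1) : ℕ) : ℝ) + 1) := by
        set m : ℝ := ((M + k : ℕ) : ℝ) with hm
        have hm0 : 0 ≤ m := Nat.cast_nonneg _
        have e : ((M + (k + 1) : ℕ) : ℝ) = m + 1 := by rw [hm]; push_cast; ring
        rw [e]
        have e2 : 2 / (m + 1) - 2 / (m + 1 + 1) = 2 / ((m + 1) * (m + 2)) := by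
          have : m + 1 + 1 = m + 2 := by ring
          rw [this]
          field_simp
          ring
        rw [e2, div_le_div_iff₀ (by positivity) (by positivity)]
        nlinarith
      linarith
  have : 0 ≤ 2 / (((M + N : ℕ) : ℝ) + 1) := by positivity
  linarith

/-- the main term as a sum of two sines -/
theorem sl_main_term {L s u v : ℝ} (hL : 0 < L) (hs : 0 < s) :
    2 / L * Real.cos (s * Real.pi / L * u) * (Real.sin (s * Real.pi / L * v) / (s * Real.pi / L))
      = 1 / Real.pi * (Real.sin (s * (Real.pi / L * (v + u))) / s
        + Real.sin (s * (Real.pi / L * (v - u))) / s) := by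
  have h1 : s * (Real.pi / L * (v + u)) = s * Real.pi / L * v + s * Real.pi / L * u := by ring
  have h2 : s * (Real.pi / L * (v - u)) = s * Real.pi / L * v - s * Real.pi / L * u := by ring
  have := Real.pi_pos
  rw [h1, h2, Real.sin_add, Real.sin_sub]
  field_simp
  ring

section
variable {a b : ℝ} {q : ℝ → ℝ} {h β : ℝ} {lam : ℕ → ℝ} {y y' : ℕ → ℝ → ℝ}

theorem SLData.block (D : SLData a b q h β lam y y') :
    ∃ n1 : ℕ, ∃ c C : ℝ, 1 ≤ c ∧ 0 ≤ C ∧ ∀ M k : ℕ, ∀ x ∈ Icc a b, ∀ T ∈ Icc a b,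
      |∑ j ∈ Finset.range k, y (n1 + (M + j)) x * (∫ t in a..T, y (n1 + (M + j)) t)| ≤
        1 / Real.pi * (|∑ j ∈ Finset.range k, Real.sin ((c + M + j) * (Real.pi / (b - a) *
            ((T - a) + (x - a)))) / (c + M + j)|
          + |∑ j ∈ Finset.range k, Real.sin ((c + M + j) * (Real.pi / (b - a) *
            ((T - a) - (x - a)))) / (c + M + j)|) + C / ((M : ℝ) + 1) := by
  obtain ⟨n1, c, C, hc, hC, H⟩ := D.terms
  have hL : 0 < b - a := sub_pos.2 D.hab
  have hpi := Real.pi_pos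
  refine ⟨n1, c, C * 2, hc, by positivity, ?_⟩
  intro M k x hx T hT
  set main : ℕ → ℝ := fun j => 1 / Real.pi * (Real.sin ((c + M + j) * (Real.pi / (b - a) *
            ((T - a) + (x - a)))) / (c + M + j) + Real.sin ((c + M + j) * (Real.pi / (b - a) *
            ((T - a) - (x - a)))) / (c + M + j)) with hmain
  have h1 : ∀ j : ℕ, |y (n1 + (M + j)) x * (∫ t in a..T, y (n1 + (M + j)) t) - main j|
      ≤ C * (1 / (((M + j : ℕ) : ℝ) + 1) ^ 2) := by
    intro j
    have h2 := H (M + j) x hx T hT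
    have hp : (0:ℝ) < c + ((M + j : ℕ) : ℝ) := by positivity
    rw [sl_main_term hL hp] at h2
    rw [mul_one_div]
    have e0 : c + ((M + j : ℕ) : ℝ) = c + M + j := by push_cast; ring
    rw [e0] at h2
    exact h2
  have e : ∑ j ∈ Finset.range k, y (n1 + (M + j)) x * (∫ t in a..T, y (n1 + (M + j)) t)
      = ∑ j ∈ Finset.range k, main j + ∑ j ∈ Finset.range k,
        (y (n1 + (M + j)) x * (∫ t in a..T, y (n1 + (M + j)) t) - main j) := by
    rw [← Finset.sum_add_distrib]
    apply Finset.sum_congr rfl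
    intro j _
    ring
  rw [e]
  refine (abs_add_le _ _).trans (add_le_add ?_ ?_)
  · simp only [hmain]
    rw [← Finset.mul_sum, Finset.sum_add_distrib, abs_mul, abs_of_pos (by positivity)]
    gcongr
    exact abs_add_le _ _
  · refine (Finset.abs_sum_le_sum_abs _ _).trans ?_
    refine (Finset.sum_le_sum (fun j _ => h1 j)).trans ?_
    rw [← Finset.mul_sum]
    have := mul_le_mul_of_nonneg_left (sl_sq_tail M k) hC
    rwa [← mul_div_assoc] at this

theorem SLData.ii (D : SLData a b q h β lam y y') (n : ℕ) {s t : ℝ} (hs : s ∈ Icc a b)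
    (ht : t ∈ Icc a b) : IntervalIntegrable (y n) volume s t := by
  apply ContinuousOn.intervalIntegrable
  exact (D.cont n).mono (uIcc_subset_Icc hs ht)

theorem SLData.intcont (D : SLData a b q h β lam y y') (n : ℕ) :
    ContinuousOn (fun T => ∫ t in a..T, y n t) (Icc a b) :=
  fun x hx => (sl_ftc (D.cont n) x hx).continuousWithinAt

theorem SLData.bdd (D : SLData a b q h β lam y y') :
    ∃ K : ℝ, 0 ≤ K ∧ ∀ N : ℕ, ∀ T ∈ Icc a b,
      |∑ n ∈ Finset.range N, y n a * (∫ t in a..T, y n t)| ≤ K := by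
  obtain ⟨n1, c, C, hc, hC, H⟩ := D.block
  have hL : 0 < b - a := sub_pos.2 D.hab
  have hpi := Real.pi_pos
  have ha : a ∈ Icc a b := left_mem_Icc.2 D.hab.le
  have hb : ∀ n, ∃ B, ∀ T ∈ Icc a b, |y n a * (∫ t in a..T, y n t)| ≤ B := by
    intro n
    obtain ⟨B, hB⟩ := isCompact_Icc.exists_bound_of_continuousOn
      (continuousOn_const.mul (D.intcont n) : ContinuousOn (fun T => y n a * ∫ t in a..T, y n t) _)
    exact ⟨B, hB⟩
  choose B hB using hb
  have hB0 : ∀ n, 0 ≤ B n := fun n => (abs_nonneg _).trans (hB n a ha)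
  have hsmall : ∀ N ≤ n1, ∀ T ∈ Icc a b,
      |∑ n ∈ Finset.range N, y n a * (∫ t in a..T, y n t)| ≤ ∑ n ∈ Finset.range n1, B n := by
    intro N hN T hT
    refine (Finset.abs_sum_le_sum_abs _ _).trans ?_
    refine (Finset.sum_le_sum (fun n _ => hB n T hT)).trans ?_
    exact Finset.sum_le_sum_of_subset_of_nonneg (Finset.range_mono hN) (fun n _ _ => hB0 n)
  have hS0 : 0 ≤ ∑ n ∈ Finset.range n1, B n := Finset.sum_nonneg (fun n _ => hB0 n)
  refine ⟨∑ n ∈ Finset.range n1, B n + (1 / Real.pi * ((1 + Real.pi) + (1 + Real.pi)) + C),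
    by positivity, ?_⟩
  intro N T hT
  rcases le_total N n1 with hN | hN
  · refine (hsmall N hN T hT).trans ?_
    have : 0 ≤ 1 / Real.pi * ((1 + Real.pi) + (1 + Real.pi)) + C := by positivity
    linarith
  · obtain ⟨k, rfl⟩ := Nat.exists_eq_add_of_le hN
    rw [Finset.sum_range_add]
    refine (abs_add_le _ _).trans (add_le_add (hsmall n1 le_rfl T hT) ?_)
    have h1 := H 0 k a ha T hT
    simp only [zero_add, Nat.cast_zero, add_zero, sub_self, sub_zero, div_one] at h1
    refine h1.trans ?_
    have hθ0 : 0 ≤ Real.pi / (b - a) * (T - a) :=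
      mul_nonneg (by positivity) (by linarith [hT.1])
    have hθ1 : Real.pi / (b - a) * (T - a) ≤ Real.pi := by
      rw [div_mul_eq_mul_div, div_le_iff₀ hL]
      gcongr
      exact hT.2
    have h2 := sl_sin_bdd hc hθ0 hθ1 k
    gcongr

theorem SLData.tail (D : SLData a b q h β lam y y') {T : ℝ} (hT : T ∈ Ioc a b) :
    ∃ n1 : ℕ, ∃ E : ℝ, 0 ≤ E ∧ ∀ M k : ℕ, ∀ x ∈ Icc a ((a + T) / 2),
      |∑ j ∈ Finset.range k, y (n1 + M + j) x * (∫ t in a..T, y (n1 + M + j) t)|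
        ≤ E / ((M : ℝ) + 1) := by
  obtain ⟨n1, c, C, hc, hC, H⟩ := D.block
  have hL : 0 < b - a := sub_pos.2 D.hab
  have hpi := Real.pi_pos
  have hTa : 0 < T - a := sub_pos.2 hT.1
  have hTL : T - a ≤ b - a := by linarith [hT.2]
  -- a lower bound for the sine
  obtain ⟨κ, hκ, hsin⟩ : ∃ κ : ℝ, 0 < κ ∧ ∀ u ∈ Icc ((T - a) / 2) (3 * (T - a) / 2),
      κ ≤ Real.sin (Real.pi / (b - a) * u / 2) := by
    have hne : (Icc ((T - a) / 2) (3 * (T - a) / 2)).Nonempty := nonempty_Icc.2 (by linarith)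
    obtain ⟨u0, hu0, hmin⟩ := isCompact_Icc.exists_isMinOn hne
      (f := fun u => Real.sin (Real.pi / (b - a) * u / 2)) (by fun_prop)
    refine ⟨_, ?_, fun u hu => hmin hu⟩
    apply Real.sin_pos_of_pos_of_lt_pi
    · have : 0 < u0 := by linarith [hu0.1]
      positivity
    · have h1 : u0 / (b - a) ≤ 3 / 2 := by
        rw [div_le_iff₀ hL]; linarith [hu0.2]
      have h2 : Real.pi / (b - a) * u0 / 2 = Real.pi / 2 * (u0 / (b - a)) := by ring
      rw [h2]
      nlinarith
  refine ⟨n1, 1 / Real.pi * (1 / κ + 1 / κ) + C, by positivity, ?_⟩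
  intro M k x hx
  have hx' : x ∈ Icc a b := ⟨hx.1, by linarith [hx.2, hT.2, D.hab]⟩
  have h1 := H M k x hx' T ⟨hT.1.le, hT.2⟩
  have hM : (0:ℝ) ≤ M := Nat.cast_nonneg M
  have hcM : 0 < c + M := by linarith
  have h2 := sl_sin_tail hcM hκ (hsin ((T - a) + (x - a))
    ⟨by linarith [hx.1], by linarith [hx.2]⟩) k
  have h3 := sl_sin_tail hcM hκ (hsin ((T - a) - (x - a))
    ⟨by linarith [hx.2], by linarith [hx.1]⟩) k
  have h4 : 1 / (κ * (c + M)) ≤ 1 / κ / ((M : ℝ) + 1) := by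
    rw [div_div]
    have h5 : (M : ℝ) + 1 ≤ c + M := by linarith
    gcongr
  simp only [add_assoc n1]
  refine h1.trans ?_
  have e : (1 / Real.pi * (1 / κ + 1 / κ) + C) / ((M : ℝ) + 1)
    = 1 / Real.pi * (1 / κ / ((M : ℝ) + 1) + 1 / κ / ((M : ℝ) + 1)) + C / ((M : ℝ) + 1) := by ring
  rw [e]
  gcongr
  · exact h2.trans h4
  · exact h3.trans h4

theorem sl_ind_mem {a b x : ℝ} : MemLp (Set.indicator (Icc a x) (fun _ => (1:ℝ))) 2
    (volume.restrict (Icc a b)) := by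
  apply MemLp.indicator measurableSet_Icc
  exact memLp_const _

theorem sl_ind_int {a b x : ℝ} (hx : x ∈ Icc a b) (g : ℝ → ℝ) :
    ∫ t in a..b, Set.indicator (Icc a x) (fun _ => (1:ℝ)) t * g t = ∫ t in a..x, g t := by
  have hab : a ≤ b := hx.1.trans hx.2
  rw [intervalIntegral.integral_of_le hab, intervalIntegral.integral_of_le hx.1,
    ← integral_Icc_eq_integral_Ioc, ← integral_Icc_eq_integral_Ioc]
  have e : (fun t => Set.indicator (Icc a x) (fun _ => (1:ℝ)) t * g t)
      = Set.indicator (Icc a x) g := by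
    ext t
    by_cases ht : t ∈ Icc a x <;> simp [ht]
  rw [e, setIntegral_indicator measurableSet_Icc]
  congr 2
  exact inter_eq_self_of_subset_right (Icc_subset_Icc le_rfl hx.2)

theorem SLData.parseval (D : SLData a b q h β lam y y') {x T : ℝ} (hT : T ∈ Icc a b)
    (hx : x ∈ Icc a T) :
    Tendsto (fun N => ∑ n ∈ Finset.range N, (∫ t in a..x, y n t) * (∫ t in a..T, y n t)) atTop
      (𝓝 (x - a)) := by
  obtain ⟨B, hB⟩ := D.basis
  have hx' : x ∈ Icc a b := ⟨hx.1, hx.2.trans hT.2⟩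
  have hs := B.hasSum_inner_mul_inner (toE a b (Set.indicator (Icc a x) (fun _ => (1:ℝ))))
    (toE a b (Set.indicator (Icc a T) (fun _ => (1:ℝ))))
  have hl := hs.tendsto_sum_nat
  rw [sl_inner D.hab.le sl_ind_mem sl_ind_mem, sl_ind_int hx'] at hl
  have e1 : ∫ t in a..x, Set.indicator (Icc a T) (fun _ => (1:ℝ)) t = x - a := by
    rw [intervalIntegral.integral_congr (g := fun _ => (1:ℝ))]
    · simp
    · intro t ht
      rw [uIcc_of_le hx.1] at ht
      have : t ∈ Icc a T := ⟨ht.1, ht.2.trans hx.2⟩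
      simp [this]
  rw [e1] at hl
  refine hl.congr (fun N => ?_)
  apply Finset.sum_congr rfl
  intro n _
  rw [hB n, real_inner_comm (toE a b (Set.indicator (Icc a T) (fun _ => (1:ℝ)))) (toE a b (y n)),
    sl_inner D.hab.le sl_ind_mem (D.memLp n), sl_inner D.hab.le sl_ind_mem (D.memLp n),
    sl_ind_int hx', sl_ind_int hT]

theorem SLData.limit (D : SLData a b q h β lam y y') {T : ℝ} (hT : T ∈ Ioc a b) :
    Tendsto (fun N => ∑ n ∈ Finset.range N, y n a * (∫ t in a..T, y n t)) atTop (𝓝 1) := by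
  obtain ⟨n1, E, hE, H⟩ := D.tail hT
  have hT' : T ∈ Icc a b := ⟨hT.1.le, hT.2⟩
  have haT := hT.1
  have ha : a ∈ Icc a b := left_mem_Icc.2 D.hab.le
  set F : ℕ → ℝ → ℝ := fun N x => ∑ n ∈ Finset.range N, y n x * (∫ t in a..T, y n t) with hF
  have hFc : ∀ N, ContinuousOn (F N) (Icc a b) := fun N =>
    continuousOn_finsetSum _ (fun n _ => (D.cont n).mul continuousOn_const)
  have hFi : ∀ N, ∀ x ∈ Icc a b, IntervalIntegrable (F N) volume a x := by
    intro N x hx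
    apply ContinuousOn.intervalIntegrable
    exact (hFc N).mono (uIcc_subset_Icc ha hx)
  have hFint : ∀ N, ∀ x ∈ Icc a b, ∫ t in a..x, F N t
      = ∑ n ∈ Finset.range N, (∫ t in a..x, y n t) * (∫ t in a..T, y n t) := by
    intro N x hx
    simp only [hF]
    rw [intervalIntegral.integral_finsetSum]
    · apply Finset.sum_congr rfl
      intro n _
      rw [intervalIntegral.integral_mul_const]
    · intro n _
      exact (D.ii n ha hx).mul_const _
  have key : ∀ M : ℕ, |F (n1 + M) a - 1| ≤ E / ((M : ℝ) + 1) := by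
    intro M
    set ε := E / ((M : ℝ) + 1) with hε
    have hdiff : ∀ x ∈ Icc a ((a + T) / 2),
        |(∫ t in a..x, F (n1 + M) t) - (x - a)| ≤ ε * (x - a) := by
      intro x hx
      have hxb : x ∈ Icc a b := ⟨hx.1, by linarith [hx.2, hT.2, D.hab]⟩
      have hxT : x ∈ Icc a T := ⟨hx.1, by linarith [hx.2]⟩
      have hl := D.parseval hT' hxT
      have hl2 := (tendsto_const_nhds (x := ∫ t in a..x, F (n1 + M) t)).sub hl |>.abs
      refine le_of_tendsto hl2 ?_
      filter_upwards [eventually_ge_atTop (n1 + M)] with N hN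
      obtain ⟨k, rfl⟩ := Nat.exists_eq_add_of_le hN
      rw [← hFint _ x hxb, ← intervalIntegral.integral_sub (hFi _ x hxb) (hFi _ x hxb),
        ← Real.norm_eq_abs]
      have := intervalIntegral.norm_integral_le_of_norm_le_const (a := a) (b := x) (C := ε)
        (f := fun t => F (n1 + M) t - F (n1 + M + k) t) ?_
      · rwa [abs_of_nonneg (by linarith [hx.1])] at this
      · intro t ht
        rw [uIoc_of_le hx.1] at ht
        have h1 := H M k t ⟨ht.1.le, ht.2.trans hx.2⟩
        simp only [hF]
        rw [Finset.sum_range_add _ (n1 + M) k, Real.norm_eq_abs, abs_sub_comm, add_sub_cancel_left]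
        exact h1
    have hd := (sl_ftc (hFc (n1 + M)) a ha).sub ((hasDerivWithinAt_id a (Icc a b)).sub_const a)
    have hd2 : HasDerivWithinAt (fun x => (∫ t in a..x, F (n1 + M) t) - (x - a))
      (F (n1 + M) a - 1) (Ioc a b) a := hd.mono Ioc_subset_Icc_self
    rw [hasDerivWithinAt_iff_tendsto_slope' (by simp)] at hd2
    have : (𝓝[Ioc a b] a).NeBot := by
      rw [nhdsWithin_Ioc_eq_nhdsGT D.hab]; infer_instance
    refine le_of_tendsto hd2.abs ?_
    have hmem : Ioc a ((a + T) / 2) ∈ 𝓝[Ioc a b] a := by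
      rw [nhdsWithin_Ioc_eq_nhdsGT D.hab]
      exact Ioc_mem_nhdsGT (by linarith)
    filter_upwards [hmem] with x hx
    have h1 := hdiff x ⟨hx.1.le, hx.2⟩
    have hxa : 0 < x - a := sub_pos.2 hx.1
    rw [slope_def_field]
    simp only [intervalIntegral.integral_same, sub_self, sub_zero]
    rw [abs_div, abs_of_pos hxa, div_le_iff₀ hxa]
    exact h1
  have hlim : Tendsto (fun M : ℕ => F (M + n1) a) atTop (𝓝 1) := by
    rw [tendsto_iff_dist_tendsto_zero]
    refine squeeze_zero (fun _ => dist_nonneg) (fun M => ?_)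
      (g := fun M : ℕ => E / ((M : ℝ) + 1)) ?_
    · rw [Real.dist_eq, add_comm]; exact key M
    · exact tendsto_const_div_atTop_nhds_zero_nat E |>.comp (tendsto_add_atTop_nat 1) |>.congr
        (fun M => by simp)
  exact (tendsto_add_atTop_iff_nat n1).1 hlim
end

theorem sl_stieltjes {a b : ℝ} (hab : a < b) (G : StieltjesFunction ℝ) {K : ℝ → ℝ}
    (hK : ContinuousOn K (Icc a b)) :
    ∫ t in a..b, G t * K t = G b * (∫ t in a..b, K t)
      - ∫ s in Ioc a b, (∫ t in a..s, K t) ∂G.measure := by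
  have hKi : Integrable K (volume.restrict (Ioc a b)) :=
    (hK.integrableOn_Icc).mono_set Ioc_subset_Icc_self
  have hfin : IsFiniteMeasure (G.measure.restrict (Ioc a b)) := by
    constructor
    rw [Measure.restrict_apply_univ, G.measure_Ioc]
    exact ENNReal.ofReal_lt_top
  set f : ℝ → ℝ → ℝ := fun t s => Set.indicator (Ioi t) (fun _ => K t) s with hf
  have hmeas : MeasurableSet {p : ℝ × ℝ | p.1 < p.2} := measurableSet_lt measurable_fst measurable_snd
  have hint : Integrable (Function.uncurry f)
      ((volume.restrict (Ioc a b)).prod (G.measure.restrict (Ioc a b))) := by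
    have h1 := (hKi.comp_fst (G.measure.restrict (Ioc a b))).indicator hmeas
    refine h1.congr (ae_of_all _ ?_)
    rintro ⟨t, s⟩
    simp only [hf, Function.uncurry, Set.indicator, mem_ofPred_eq, mem_Ioi]
  have hswap := integral_integral_swap hint
  have e1 : ∀ t ∈ Ioc a b, ∫ s in Ioc a b, f t s ∂G.measure = (G b - G t) * K t := by
    intro t ht
    simp only [hf]
    rw [setIntegral_indicator measurableSet_Ioi]
    have : Ioc a b ∩ Ioi t = Ioc t b := by
      ext s; simp only [mem_inter_iff, mem_Ioc, mem_Ioi]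
      constructor
      · rintro ⟨⟨_, h2⟩, h3⟩; exact ⟨h3, h2⟩
      · rintro ⟨h1, h2⟩; exact ⟨⟨ht.1.trans h1, h2⟩, h1⟩
    rw [this, setIntegral_const, measureReal_def, G.measure_Ioc,
      ENNReal.toReal_ofReal (sub_nonneg.2 (G.mono ht.2)), smul_eq_mul]
  have e2 : ∀ s ∈ Ioc a b, ∫ t in Ioc a b, f t s = ∫ t in a..s, K t := by
    intro s hs
    have h1 : (fun t => f t s) = Set.indicator (Iio s) K := by
      ext t
      simp only [hf, Set.indicator, mem_Ioi, mem_Iio]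
    rw [h1, setIntegral_indicator measurableSet_Iio, intervalIntegral.integral_of_le hs.1.le,
      integral_Ioc_eq_integral_Ioo]
    congr 2
    ext t; simp only [mem_inter_iff, mem_Ioc, mem_Iio, mem_Ioo]
    constructor
    · rintro ⟨⟨h1, h2⟩, h3⟩; exact ⟨h1, h3⟩
    · rintro ⟨h1, h2⟩; exact ⟨⟨h1, h2.le.trans hs.2⟩, h2⟩
  rw [setIntegral_congr_fun measurableSet_Ioc e1, setIntegral_congr_fun measurableSet_Ioc e2] at hswap
  rw [← hswap, intervalIntegral.integral_of_le hab.le, intervalIntegral.integral_of_le hab.le,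
    ← integral_const_mul, ← integral_sub]
  · apply integral_congr_ae
    refine ae_of_all _ (fun t => ?_)
    simp only
    ring
  · exact hKi.const_mul _
  · have := hint.integral_prod_left
    refine this.congr ?_
    rw [Filter.EventuallyEq, ae_restrict_iff' measurableSet_Ioc]
    exact ae_of_all _ (fun t ht => e1 t ht)

theorem sl_mono_lim {a b : ℝ} (hab : a < b) {K : ℕ → ℝ → ℝ} (hK : ∀ N, ContinuousOn (K N) (Icc a b))
    {B : ℝ} (hB : ∀ N, ∀ T ∈ Icc a b, |∫ t in a..T, K N t| ≤ B)
    (hlim : ∀ T ∈ Ioc a b, Tendsto (fun N => ∫ t in a..T, K N t) atTop (𝓝 1))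
    {g : ℝ → ℝ} (hg : Monotone g) :
    Tendsto (fun N => ∫ t in a..b, g t * K N t) atTop (𝓝 (Function.rightLim g a)) := by
  set G := hg.stieltjesFunction with hG
  have hGg : ∀ᵐ t ∂(volume : Measure ℝ), G t = g t := by
    have hc := hg.countable_not_continuousAt
    filter_upwards [hc.ae_notMem volume] with t ht
    have ht' : ContinuousAt g t := by simpa using ht
    rw [hG, hg.stieltjesFunction_eq]
    exact hg.continuousWithinAt_Ioi_iff_rightLim_eq.1 ht'.continuousWithinAt
  have e : ∀ N, ∫ t in a..b, g t * K N t = G b * (∫ t in a..b, K N t)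
      - ∫ s in Ioc a b, (∫ t in a..s, K N t) ∂G.measure := by
    intro N
    rw [← sl_stieltjes hab G (hK N)]
    apply intervalIntegral.integral_congr_ae
    filter_upwards [hGg] with t ht _
    rw [ht]
  have hfin : IsFiniteMeasure (G.measure.restrict (Ioc a b)) := by
    constructor
    rw [Measure.restrict_apply_univ, G.measure_Ioc]
    exact ENNReal.ofReal_lt_top
  have h1 : Tendsto (fun N => ∫ s in Ioc a b, (∫ t in a..s, K N t) ∂G.measure) atTop
      (𝓝 (∫ s in Ioc a b, (1:ℝ) ∂G.measure)) := by
    apply tendsto_integral_of_dominated_convergence (fun _ => B)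
    · intro N
      have : ContinuousOn (fun s => ∫ t in a..s, K N t) (Ioc a b) :=
        ContinuousOn.mono (fun x hx => (sl_ftc (hK N) x hx).continuousWithinAt) Ioc_subset_Icc_self
      exact this.aestronglyMeasurable measurableSet_Ioc
    · exact integrable_const _
    · intro N
      rw [ae_restrict_iff' measurableSet_Ioc]
      exact ae_of_all _ (fun s hs => hB N s (Ioc_subset_Icc_self hs))
    · rw [ae_restrict_iff' measurableSet_Ioc]
      exact ae_of_all _ (fun s hs => hlim s hs)
  have h2 : ∫ s in Ioc a b, (1:ℝ) ∂G.measure = G b - G a := by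
    rw [setIntegral_const, measureReal_def, G.measure_Ioc,
      ENNReal.toReal_ofReal (sub_nonneg.2 (G.mono hab.le)), smul_eq_mul, mul_one]
  have h3 := ((hlim b ⟨hab, le_rfl⟩).const_mul (G b)).sub h1
  rw [h2] at h3
  have h4 : G b * 1 - (G b - G a) = Function.rightLim g a := by
    rw [hG, hg.stieltjesFunction_eq, hg.stieltjesFunction_eq]; ring
  rw [h4] at h3
  exact h3.congr (fun N => (e N).symm)

theorem sl_bv_lim {a b : ℝ} (hab : a < b) {K : ℕ → ℝ → ℝ} (hK : ∀ N, ContinuousOn (K N) (Icc a b))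
    {B : ℝ} (hB : ∀ N, ∀ T ∈ Icc a b, |∫ t in a..T, K N t| ≤ B)
    (hlim : ∀ T ∈ Ioc a b, Tendsto (fun N => ∫ t in a..T, K N t) atTop (𝓝 1))
    {f : ℝ → ℝ} (hf : ContinuousOn f (Icc a b)) (hbv : BoundedVariationOn f (Icc a b)) :
    Tendsto (fun N => ∫ t in a..b, f t * K N t) atTop (𝓝 (f a)) := by
  obtain ⟨p0, r0, hp0, hr0, hfe⟩ :=
    hbv.locallyBoundedVariationOn.exists_monotoneOn_sub_monotoneOn
  have ha : a ∈ Icc a b := left_mem_Icc.2 hab.le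
  have hb : b ∈ Icc a b := right_mem_Icc.2 hab.le
  have hext : ∀ {p : ℝ → ℝ}, MonotoneOn p (Icc a b) → ∃ g, Monotone g ∧ EqOn p g (Icc a b) := by
    intro p hp
    apply hp.exists_monotone_extension
    · exact ⟨p a, by rintro _ ⟨x, hx, rfl⟩; exact hp ha hx hx.1⟩
    · exact ⟨p b, by rintro _ ⟨x, hx, rfl⟩; exact hp hx hb hx.2⟩
  obtain ⟨p, hp, hpe⟩ := hext hp0
  obtain ⟨r, hr, hre⟩ := hext hr0
  have hfpr : ∀ x ∈ Icc a b, f x = p x - r x := by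
    intro x hx
    rw [← hpe hx, ← hre hx, hfe]; rfl
  have hl := (sl_mono_lim hab hK hB hlim hp).sub (sl_mono_lim hab hK hB hlim hr)
  have hval : Function.rightLim p a - Function.rightLim r a = f a := by
    have h1 := (hp.tendsto_rightLim a).sub (hr.tendsto_rightLim a)
    have h2 : Tendsto f (𝓝[>] a) (𝓝 (f a)) := by
      have := (hf a ha).mono_left (nhdsWithin_mono a Ioc_subset_Icc_self)
      rwa [nhdsWithin_Ioc_eq_nhdsGT hab] at this
    refine tendsto_nhds_unique (h1.congr' ?_) h2
    filter_upwards [Ioc_mem_nhdsGT hab] with x hx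
    exact (hfpr x (Ioc_subset_Icc_self hx)).symm
  rw [hval] at hl
  refine hl.congr (fun N => ?_)
  have hKu : ContinuousOn (K N) (uIcc a b) := by rw [uIcc_of_le hab.le]; exact hK N
  rw [← intervalIntegral.integral_sub (hp.intervalIntegrable.mul_continuousOn hKu)
    (hr.intervalIntegrable.mul_continuousOn hKu)]
  apply intervalIntegral.integral_congr
  intro x hx
  rw [uIcc_of_le hab.le] at hx
  simp only
  rw [hfpr x hx]; ring

theorem SLData.final {a b : ℝ} {q : ℝ → ℝ} {h β : ℝ} {lam : ℕ → ℝ} {y y' : ℕ → ℝ → ℝ}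
    (D : SLData a b q h β lam y y') {f : ℝ → ℝ} (hf : ContinuousOn f (Icc a b))
    (hbv : BoundedVariationOn f (Icc a b)) :
    Tendsto (fun N : ℕ => ∑ n ∈ Finset.range N, (∫ x in a..b, y n x * f x) * y n a) atTop
      (𝓝 (f a)) := by
  have ha : a ∈ Icc a b := left_mem_Icc.2 D.hab.le
  have hb : b ∈ Icc a b := right_mem_Icc.2 D.hab.le
  set K : ℕ → ℝ → ℝ := fun N t => ∑ n ∈ Finset.range N, y n a * y n t with hKdef
  have hK : ∀ N, ContinuousOn (K N) (Icc a b) := fun N =>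
    continuousOn_finsetSum _ (fun n _ => continuousOn_const.mul (D.cont n))
  have hS : ∀ N, ∀ T ∈ Icc a b, ∫ t in a..T, K N t
      = ∑ n ∈ Finset.range N, y n a * (∫ t in a..T, y n t) := by
    intro N T hT
    simp only [hKdef]
    rw [intervalIntegral.integral_finsetSum]
    · simp only [intervalIntegral.integral_const_mul]
    · exact fun n _ => (D.ii n ha hT).const_mul _
  obtain ⟨B, _, hB⟩ := D.bdd
  have hl := sl_bv_lim D.hab hK (B := B) (fun N T hT => by rw [hS N T hT]; exact hB N T hT)
    (fun T hT => (D.limit hT).congr (fun N => (hS N T (Ioc_subset_Icc_self hT)).symm)) hf hbv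
  refine hl.congr (fun N => ?_)
  simp only [hKdef, Finset.mul_sum]
  rw [intervalIntegral.integral_finsetSum]
  · apply Finset.sum_congr rfl
    intro n _
    rw [← intervalIntegral.integral_mul_const]
    congr 1
    ext x; ring
  · intro n _
    apply ContinuousOn.intervalIntegrable
    rw [uIcc_of_le D.hab.le]
    exact hf.mul (continuousOn_const.mul (D.cont n))

end

/-- At the left endpoint `x = a` the series `∑ cₙ yₙ(a)` converges; its sum equals
`f(a)` if `sin α ≠ 0` and equals `0` in the Dirichlet case `sin α = 0`. -/
theorem sl_expansion_left_endpoint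
    (a b : ℝ) (hab : a < b)
    (q : ℝ → ℝ) (hq : ContinuousOn q (Set.Icc a b))
    (α β : ℝ) (hα : α ∈ Set.Ico 0 (2 * Real.pi)) (hβ : β ∈ Set.Ico 0 (2 * Real.pi))
    (lam : ℕ → ℝ) (y : ℕ → ℝ → ℝ)
    (heig : ∀ n, IsSLEigenpair a b q α β (lam n) (y n))
    (hmono : StrictMono lam)
    (hcomplete : ∀ μ z, IsSLEigenpair a b q α β μ z → ∃ n, lam n = μ)
    (hnorm : ∀ n, ∫ x in a..b, (y n x) ^ 2 = 1)
    (f : ℝ → ℝ) (hf : ContinuousOn f (Set.Icc a b))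
    (hbv : BoundedVariationOn f (Set.Icc a b))
    (c : ℕ → ℝ) (hc : ∀ n, c n = ∫ x in a..b, y n x * f x) :
    Filter.Tendsto (fun N : ℕ => ∑ n ∈ Finset.range N, c n * y n a)
      Filter.atTop (nhds (if Real.sin α ≠ 0 then f a else 0)) := by
  have hba : ∀ n, ∃ y' : ℝ → ℝ, SLSol a b (fun x => q x - lam n) (y n) y' ∧
      y n a * Real.cos α + y' a * Real.sin α = 0 ∧ y n b * Real.cos β + y' b * Real.sin β = 0 := by
    intro n
    obtain ⟨y', y'', h1, h2, _, _, h5, h6, h7⟩ := heig n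
    refine ⟨y', ⟨h1, fun x hx => ?_⟩, h6, h7⟩
    have e : (q x - lam n) * y n x = y'' x := by linarith [h5 x hx]
    simp only
    rw [e]
    exact h2 x hx
  choose y' hsol hbca hbcb using hba
  by_cases hs : Real.sin α = 0
  · have hcos : Real.cos α ≠ 0 := by
      intro hc0
      have := Real.sin_sq_add_cos_sq α
      rw [hs, hc0] at this
      norm_num at this
    have hy0 : ∀ n, y n a = 0 := by
      intro n
      have := hbca n
      rw [hs, mul_zero, add_zero] at this
      exact (mul_eq_zero.1 this).resolve_right hcos
    simp [hs, hy0]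
  · have D : SLData a b q (-Real.cos α / Real.sin α) β lam y y' :=
      { hab := hab
        hq := hq
        sol := hsol
        bca := fun n => by
          have := hbca n
          field_simp
          linarith
        bcb := hbcb
        norm := hnorm
        mono := hmono
        complete := by
          intro μ z z' hz hza hzb hne
          apply hcomplete μ z
          refine ⟨z', fun x => (q x - μ) * z x, hz.1, hz.2, ?_, hne, ?_, ?_, hzb⟩
          · exact (hq.sub continuousOn_const).mul hz.cont
          · intro x _
            ring
          · rw [hza]
            field_simp
            ring }
    rw [if_pos hs]
    refine (D.final hf hbv).congr (fun N => ?_)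
    apply Finset.sum_congr rfl
    intro n _
    rw [hc n]
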